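/- arXiv:2404.17678 — 2 statements merged into one kernel-verified Lean document; each statement's English description precedes it below -/
import Mathlib

section
/- Let a ∈ ℂ be such that a is not a nonzero integer, and assume none of the numbers a/2 + 5/8, a/2 + 7/8, −a/2 + 5/8, −a/2 + 7/8 is a nonpositive integer. Then _3F_3[1/2, 1/2 + a, 1/2 − a; 1, 1 + a, 1 − a | −1] = π · Γ(1 + a) Γ(1 − a) / ( √2 · Γ(a/2 + 5/8) Γ(a/2 + 7/8) Γ(−a/2 + 5/8) Γ(−a/2 + 7/8) ), the series on the left converging. -/
open Complex

/-- The `k`-th coefficient of the classical generalized hypergeometric series with upper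
parameters `a` and lower parameters `b` (indexed by a finite type `ι`):
`(∏ᵢ (aᵢ)ₖ) / (∏ᵢ (bᵢ)ₖ)` where `(x)ₖ` is the Pochhammer (rising factorial) symbol. -/
noncomputable def hypCoeff {ι : Type} [Fintype ι] (a b : ι → ℂ) (k : ℕ) : ℂ :=
  (∏ i, (ascPochhammer ℂ k).eval (a i)) / (∏ i, (ascPochhammer ℂ k).eval (b i))

/-- The classical generalized hypergeometric series `ₘFₘ[a ; b | z]`. -/
noncomputable def cHyp {ι : Type} [Fintype ι] (a b : ι → ℂ) (z : ℂ) : ℂ :=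
  ∑' k : ℕ, hypCoeff a b k * z ^ k

/-- A complex number is a nonpositive integer, i.e. lies in `{0, -1, -2, …}`. -/
def IsNonposInt (z : ℂ) : Prop := ∃ k : ℕ, z = -(k : ℂ)

open Filter Topology Asymptotics

noncomputable def PP (x : ℂ) (n : ℕ) : ℂ := ∏ j ∈ Finset.range n, (x + j)

lemma PP_zero (x : ℂ) : PP x 0 = 1 := by simp [PP]

lemma PP_succ (x : ℂ) (n : ℕ) : PP x (n + 1) = PP x n * (x + n) := by
  simp [PP, Finset.prod_range_succ]

lemma PP_eval (x : ℂ) (n : ℕ) : (ascPochhammer ℂ n).eval x = PP x n := by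
  induction n with
  | zero => simp [PP_zero]
  | succ n ih => rw [ascPochhammer_succ_eval, ih, PP_succ]

lemma PP_shift (x : ℂ) (n : ℕ) : x * PP (x + 1) n = PP x n * (x + n) := by
  rw [← PP_succ, PP, PP, Finset.prod_range_succ', mul_comm]
  simp only [Nat.cast_zero, add_zero, Nat.cast_add, Nat.cast_one]
  congr 1
  exact Finset.prod_congr rfl fun j _ => by ring

lemma PP_ne (x : ℂ) (h : ∀ n : ℕ, x + n ≠ 0) (n : ℕ) : PP x n ≠ 0 :=
  Finset.prod_ne_zero_iff.2 fun j _ => h j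

lemma PP_one (n : ℕ) : PP 1 n = n.factorial := by
  induction n with
  | zero => simp [PP_zero]
  | succ n ih => rw [PP_succ, ih, Nat.factorial_succ]; push_cast; ring

/-- Pochhammer asymptotics. -/
lemma PP_tendsto (x : ℂ) :
    Tendsto (fun n : ℕ => PP x n * n / ((n : ℂ) ^ x * n.factorial)) atTop (𝓝 (Gamma x)⁻¹) := by
  by_cases hx : ∃ m : ℕ, x = -m
  · obtain ⟨m, rfl⟩ := hx
    rw [Gamma_neg_nat_eq_zero, inv_zero]
    refine tendsto_const_nhds.congr' ?_
    filter_upwards [eventually_gt_atTop m] with n hn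
    have : PP (-(m : ℂ)) n = 0 := Finset.prod_eq_zero (Finset.mem_range.2 hn) (by simp)
    simp [this]
  · push Not at hx
    have h1 := (GammaSeq_tendsto_Gamma x).inv₀ (Gamma_ne_zero hx)
    have h2 : Tendsto (fun n : ℕ => (n : ℂ) / (n + x)) atTop (𝓝 1) := by
      exact tendsto_natCast_div_add_atTop x
    have h3 := h1.mul h2
    rw [mul_one] at h3
    refine h3.congr' ?_
    filter_upwards [eventually_gt_atTop 0] with n hn
    have hn0 : (n : ℂ) ≠ 0 := by exact_mod_cast hn.ne'
    have hxn : x + n ≠ 0 := fun h => hx n (by linear_combination h)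
    have hxn' : (n : ℂ) + x ≠ 0 := by rwa [add_comm]
    have hc : (n : ℂ) ^ x ≠ 0 := by simp [cpow_eq_zero_iff, hn0]
    have hf : (n.factorial : ℂ) ≠ 0 := by exact_mod_cast n.factorial_ne_zero
    rw [GammaSeq, Finset.prod_range_succ]
    change ((n : ℂ) ^ x * n.factorial / (PP x n * (x + n)))⁻¹ * _ = _
    rw [inv_div]
    field_simp
    ring

lemma pow_norm (x : ℂ) {n : ℕ} (hn : 0 < n) : ‖(n : ℂ) ^ x‖ = (n : ℝ) ^ x.re :=
  Complex.norm_natCast_cpow_of_pos hn x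

lemma PP_upper (x : ℂ) :
    (fun n : ℕ => PP x n / n.factorial) =O[atTop] (fun n : ℕ => (n : ℝ) ^ (x.re - 1)) := by
  have h := (PP_tendsto x).isBigO_one ℝ
  have h3 : (fun n : ℕ => PP x n / n.factorial) =O[atTop]
      (fun n : ℕ => ‖PP x n * n / ((n : ℂ) ^ x * n.factorial)‖ * (n : ℝ) ^ (x.re - 1)) := by
    refine IsBigO.of_bound 1 ?_
    filter_upwards [eventually_gt_atTop 0] with n hn
    have hn0 : (0 : ℝ) < n := by exact_mod_cast hn
    have hp : (0 : ℝ) < (n : ℝ) ^ x.re := Real.rpow_pos_of_pos hn0 _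
    apply le_of_eq
    rw [norm_mul ‖_‖, norm_norm, norm_div, norm_div, norm_mul, norm_mul, pow_norm x hn,
      Real.rpow_sub_one hn0.ne', Real.norm_of_nonneg (by positivity), Complex.norm_natCast,
      Complex.norm_natCast]
    have hf : (n.factorial : ℝ) ≠ 0 := by exact_mod_cast n.factorial_ne_zero
    field_simp
  refine h3.trans ?_
  simpa using (h.norm_left).mul (isBigO_refl (fun n : ℕ => (n : ℝ) ^ (x.re - 1)) atTop)

lemma PP_lower (y : ℂ) (hy : ∀ n : ℕ, y + n ≠ 0) :
    (fun n : ℕ => (n.factorial : ℂ) / PP y n) =O[atTop] (fun n : ℕ => (n : ℝ) ^ (1 - y.re)) := by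
  have hG : Gamma y ≠ 0 := Gamma_ne_zero fun m h => hy m (by rw [h]; ring)
  have h := ((PP_tendsto y).inv₀ (inv_ne_zero hG)).isBigO_one ℝ
  have h3 : (fun n : ℕ => (n.factorial : ℂ) / PP y n) =O[atTop]
      (fun n : ℕ => ‖(PP y n * n / ((n : ℂ) ^ y * n.factorial))⁻¹‖ * (n : ℝ) ^ (1 - y.re)) := by
    refine IsBigO.of_bound 1 ?_
    filter_upwards [eventually_gt_atTop 0] with n hn
    have hn0 : (0 : ℝ) < n := by exact_mod_cast hn
    have hp : (0 : ℝ) < (n : ℝ) ^ y.re := Real.rpow_pos_of_pos hn0 _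
    have hP : ‖PP y n‖ ≠ 0 := norm_ne_zero_iff.2 (PP_ne y hy n)
    apply le_of_eq
    rw [norm_mul ‖_‖, norm_norm, norm_inv, norm_div, norm_div, norm_mul, norm_mul, pow_norm y hn,
      Real.rpow_sub hn0, Real.rpow_one, Real.norm_of_nonneg (by positivity), Complex.norm_natCast,
      Complex.norm_natCast]
    have hf : (n.factorial : ℝ) ≠ 0 := by exact_mod_cast n.factorial_ne_zero
    field_simp
  refine h3.trans ?_
  simpa using (h.norm_left).mul (isBigO_refl (fun n : ℕ => (n : ℝ) ^ (1 - y.re)) atTop)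

lemma lin_bigO (c e : ℂ) : (fun n : ℕ => c + e * n) =O[atTop] (fun n : ℕ => (n : ℝ) ^ (1 : ℝ)) := by
  refine IsBigO.of_bound (‖c‖ + ‖e‖) ?_
  filter_upwards [eventually_gt_atTop 0] with n hn
  have hn1 : (1 : ℝ) ≤ n := by exact_mod_cast hn
  rw [Real.rpow_one, Real.norm_of_nonneg (by positivity)]
  calc ‖c + e * n‖ ≤ ‖c‖ + ‖e * n‖ := norm_add_le _ _
    _ = ‖c‖ + ‖e‖ * n := by simp
    _ ≤ _ := by nlinarith [norm_nonneg c]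

lemma bigO_mul {f g : ℕ → ℂ} {u v : ℝ} (hf : f =O[atTop] (fun n : ℕ => (n : ℝ) ^ u))
    (hg : g =O[atTop] (fun n : ℕ => (n : ℝ) ^ v)) :
    (fun n => f n * g n) =O[atTop] (fun n : ℕ => (n : ℝ) ^ (u + v)) := by
  refine (hf.mul hg).congr' EventuallyEq.rfl ?_
  filter_upwards [eventually_gt_atTop 0] with n hn
  rw [Real.rpow_add (by exact_mod_cast hn)]

lemma sign_bigO : (fun n : ℕ => (-1 : ℂ) ^ n) =O[atTop] (fun n : ℕ => (n : ℝ) ^ (0 : ℝ)) := by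
  refine IsBigO.of_bound 1 ?_
  filter_upwards with n
  simp

/-- Summand of the very-well-poised series. -/
noncomputable def tt (A b : ℂ) (n : ℕ) : ℂ :=
  (A + 2 * n) * A⁻¹ * (-1) ^ n * (PP A n / n.factorial) * (PP b n / n.factorial)
    * (PP (1 - b) n / n.factorial) * (PP (1 / 4) n / n.factorial) * (PP (3 / 4) n / n.factorial)
    * (n.factorial / PP (1 + A - b) n) * (n.factorial / PP (A + b) n)
    * (n.factorial / PP (A + 3 / 4) n) * (n.factorial / PP (A + 1 / 4) n)

noncomputable def qq (A b : ℂ) (n : ℕ) : ℂ :=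
  (-1) ^ n * (PP A n / n.factorial) * (PP b n / n.factorial)
    * (PP (-b) n / n.factorial) * (PP (1 / 4) n / n.factorial) * (PP (3 / 4) n / n.factorial)
    * (n.factorial / PP (1 + A - b) n) * (n.factorial / PP (A + b + 2) n)
    * (n.factorial / PP (A + 3 / 4 + 1) n) * (n.factorial / PP (A + 1 / 4 + 1) n)

lemma pos_ne {α : ℝ} (h : 0 < α) (n : ℕ) : (α : ℂ) + n ≠ 0 := by
  have : (0 : ℝ) < α + n := by positivity
  exact_mod_cast this.ne'

lemma tt_bigO (α : ℝ) (hα : 1 / 2 ≤ α) (b : ℂ) (hm : ∀ n : ℕ, 1 + (α : ℂ) - b + n ≠ 0)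
    (hp : ∀ n : ℕ, (α : ℂ) + b + n ≠ 0) :
    tt α b =O[atTop] (fun n : ℕ => (n : ℝ) ^ (-3 * α)) := by
  have h34 : ∀ n : ℕ, (α : ℂ) + 3 / 4 + n ≠ 0 := by
    have := pos_ne (α := α + 3 / 4) (by linarith); push_cast at this; exact this
  have h14 : ∀ n : ℕ, (α : ℂ) + 1 / 4 + n ≠ 0 := by
    have := pos_ne (α := α + 1 / 4) (by linarith); push_cast at this; exact this
  have hA : (fun _ : ℕ => (α : ℂ)⁻¹) =O[atTop] (fun n : ℕ => (n : ℝ) ^ (0 : ℝ)) := by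
    simpa using isBigO_const_const (α : ℂ)⁻¹ (one_ne_zero (α := ℝ)) (atTop : Filter ℕ)
  have := bigO_mul (bigO_mul (bigO_mul (bigO_mul (bigO_mul (bigO_mul (bigO_mul (bigO_mul (bigO_mul
    (bigO_mul (bigO_mul (lin_bigO α 2) hA) sign_bigO) (PP_upper α)) (PP_upper b)) (PP_upper (1 - b)))
    (PP_upper (1 / 4))) (PP_upper (3 / 4))) (PP_lower _ hm)) (PP_lower _ hp)) (PP_lower _ h34))
    (PP_lower _ h14)
  refine this.congr' EventuallyEq.rfl ?_
  filter_upwards with n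
  congr 1
  have e1 : (1 / 4 : ℂ).re = 1 / 4 := by norm_num
  have e2 : (3 / 4 : ℂ).re = 3 / 4 := by norm_num
  simp only [add_re, sub_re, ofReal_re, one_re, e1, e2]
  ring

lemma qq_bigO (α : ℝ) (hα : 1 / 2 ≤ α) (b : ℂ) (hm : ∀ n : ℕ, 1 + (α : ℂ) - b + n ≠ 0)
    (hp : ∀ n : ℕ, (α : ℂ) + b + n ≠ 0) :
    qq α b =O[atTop] (fun n : ℕ => (n : ℝ) ^ (-3 * α - 6)) := by
  have h34 : ∀ n : ℕ, (α : ℂ) + 3 / 4 + 1 + n ≠ 0 := by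
    have := pos_ne (α := α + 3 / 4 + 1) (by linarith); push_cast at this; exact this
  have h14 : ∀ n : ℕ, (α : ℂ) + 1 / 4 + 1 + n ≠ 0 := by
    have := pos_ne (α := α + 1 / 4 + 1) (by linarith); push_cast at this; exact this
  have hp2 : ∀ n : ℕ, (α : ℂ) + b + 2 + n ≠ 0 := by
    intro n h; apply hp (n + 2); push_cast; linear_combination h
  have := bigO_mul (bigO_mul (bigO_mul (bigO_mul (bigO_mul (bigO_mul (bigO_mul
    (bigO_mul (bigO_mul sign_bigO (PP_upper α)) (PP_upper b)) (PP_upper (- b)))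
    (PP_upper (1 / 4))) (PP_upper (3 / 4))) (PP_lower _ hm)) (PP_lower _ hp2)) (PP_lower _ h34))
    (PP_lower _ h14)
  refine this.congr' EventuallyEq.rfl ?_
  filter_upwards with n
  congr 1
  have e1 : (1 / 4 : ℂ).re = 1 / 4 := by norm_num
  have e2 : (3 / 4 : ℂ).re = 3 / 4 := by norm_num
  have e3 : (2 : ℂ).re = 2 := by norm_num
  simp only [add_re, sub_re, neg_re, ofReal_re, one_re, e1, e2, e3]
  ring

lemma tt_summable (α : ℝ) (hα : 1 / 2 ≤ α) (b : ℂ) (hm : ∀ n : ℕ, 1 + (α : ℂ) - b + n ≠ 0)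
    (hp : ∀ n : ℕ, (α : ℂ) + b + n ≠ 0) : Summable (tt α b) :=
  summable_of_isBigO_nat (Real.summable_nat_rpow.2 (by linarith)) (tt_bigO α hα b hm hp)

/-- Right-hand side of the telescoping identity. -/
noncomputable def gg (A b : ℂ) (n : ℕ) : ℂ :=
  qq A b n * (0 + 1 * n) * (A - b + 1 * n) * (A + b + 1 + 1 * n) * (A + 3 / 4 + 1 * n) * (A + 1 / 4 + 1 * n)
    * (2 * A + b + 1 * n)

lemma gg_tendsto (α : ℝ) (hα : 1 / 2 ≤ α) (b : ℂ) (hm : ∀ n : ℕ, 1 + (α : ℂ) - b + n ≠ 0)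
    (hp : ∀ n : ℕ, (α : ℂ) + b + n ≠ 0) : Tendsto (gg α b) atTop (𝓝 0) := by
  have := bigO_mul (bigO_mul (bigO_mul (bigO_mul (bigO_mul (bigO_mul (qq_bigO α hα b hm hp)
    (lin_bigO 0 1)) (lin_bigO (α - b) 1)) (lin_bigO (α + b + 1) 1)) (lin_bigO (α + 3 / 4) 1))
    (lin_bigO (α + 1 / 4) 1)) (lin_bigO (2 * α + b) 1)
  refine this.trans_tendsto ?_
  have e : -3 * α - 6 + 1 + 1 + 1 + 1 + 1 + 1 = - (3 * α) := by ring
  rw [e]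
  exact (tendsto_rpow_neg_atTop (by linarith)).comp tendsto_natCast_atTop_atTop

lemma PP_shift_up (x : ℂ) (hx : x ≠ 0) (n : ℕ) : PP (x + 1) n = PP x n * ((x + n) / x) := by
  rw [← mul_div_assoc, eq_div_iff hx, mul_comm, PP_shift]

lemma PP_shift_low (x : ℂ) (hx : ∀ n : ℕ, x + n ≠ 0) (n : ℕ) (f : ℂ) :
    f / PP x n = f / PP (x + 1) n * ((x + n) / x) := by
  have h0 : x ≠ 0 := by simpa using hx 0
  have h1 := PP_ne x hx n
  have h2 := hx n
  rw [PP_shift_up x h0]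
  field_simp

lemma tt_eq (A b : ℂ) (n : ℕ) (hb : b ≠ 0) (hA : A ≠ 0)
    (hp : ∀ n : ℕ, A + b + n ≠ 0) (h3 : ∀ n : ℕ, A + 3 / 4 + n ≠ 0)
    (h1 : ∀ n : ℕ, A + 1 / 4 + n ≠ 0) :
    A * b * (A + b) * (A + b + 1) * (A + 3 / 4) * (A + 1 / 4) * tt A b n =
      -(A + 2 * n) * (n - b) * (A + b + n) * (A + b + n + 1) * (A + 3 / 4 + n) * (A + 1 / 4 + n)
        * qq A b n := by
  have e1 : PP (1 - b) n = PP (-b) n * ((-b + n) / (-b)) := by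
    rw [← PP_shift_up (-b) (neg_ne_zero.2 hb)]; congr 1; ring
  have hp1 : ∀ n : ℕ, A + b + 1 + n ≠ 0 := by
    intro n h; apply hp (n + 1); push_cast; linear_combination h
  have e2 := PP_shift_low (A + b) hp n n.factorial
  have e3 := PP_shift_low (A + b + 1) hp1 n n.factorial
  have e4 : A + b + 1 + 1 = A + b + 2 := by ring
  rw [e4] at e3
  rw [tt, qq, e1, e2, e3, PP_shift_low _ h3 n n.factorial, PP_shift_low _ h1 n n.factorial]
  have z1 : A + b ≠ 0 := by simpa using hp 0
  have z2 : A + b + 1 ≠ 0 := by simpa using hp1 0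
  have z3 : A + 3 / 4 ≠ 0 := by simpa using h3 0
  have z4 : A + 1 / 4 ≠ 0 := by simpa using h1 0
  rw [mul_div_right_comm (PP (-b) n)]
  generalize (n.factorial : ℂ) / PP (1 + A - b) n = i1
  generalize (n.factorial : ℂ) / PP (A + b + 2) n = i2
  generalize (n.factorial : ℂ) / PP (A + 3 / 4 + 1) n = i3
  generalize (n.factorial : ℂ) / PP (A + 1 / 4 + 1) n = i4
  generalize PP (-b) n / (n.factorial : ℂ) = g1
  generalize PP b n / (n.factorial : ℂ) = g2
  generalize PP A n / (n.factorial : ℂ) = g3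
  generalize PP (1 / 4) n / (n.factorial : ℂ) = g4
  generalize PP (3 / 4) n / (n.factorial : ℂ) = g5
  generalize (-1 : ℂ) ^ n = s
  generalize (n : ℂ) = x at *
  clear e1 e2 e3 e4 h1 h3 hp hp1
  have c1 : (A + b) * ((A + b + x) / (A + b)) = A + b + x := by field_simp
  have c2 : (A + b + 1) * ((A + b + 1 + x) / (A + b + 1)) = A + b + 1 + x := by field_simp
  have c3 : (A + 3 / 4) * ((A + 3 / 4 + x) / (A + 3 / 4)) = A + 3 / 4 + x := mul_div_cancel₀ _ z3
  have c4 : (A + 1 / 4) * ((A + 1 / 4 + x) / (A + 1 / 4)) = A + 1 / 4 + x := mul_div_cancel₀ _ z4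
  have c5 : b * ((-b + x) / (-b)) = -(x - b) := by field_simp; ring
  have c6 : A * A⁻¹ = 1 := mul_inv_cancel₀ hA
  calc _ = (A + 2 * x) * (A * A⁻¹) * s * g3 * g2 * (g1 * (b * ((-b + x) / (-b)))) * g4 * g5 * i1
        * i2 * ((A + b) * ((A + b + x) / (A + b)))
        * ((A + b + 1) * ((A + b + 1 + x) / (A + b + 1)))
        * (i3 * ((A + 3 / 4) * ((A + 3 / 4 + x) / (A + 3 / 4))))
        * (i4 * ((A + 1 / 4) * ((A + 1 / 4 + x) / (A + 1 / 4)))) := by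
        generalize (A + b + x) / (A + b) = y1
        generalize (A + b + 1 + x) / (A + b + 1) = y2
        generalize (A + 3 / 4 + x) / (A + 3 / 4) = y3
        generalize (A + 1 / 4 + x) / (A + 1 / 4) = y4
        generalize (-b + x) / (-b) = y5
        ring
    _ = _ := by
        rw [c1, c2, c3, c4, c5, c6]; ring

lemma tt_eq' (A b : ℂ) (n : ℕ) (hb : b ≠ 0) (hA : A ≠ 0) (hA1 : A + 1 ≠ 0) :
    b * (A + 1) * tt (A + 1) (b + 1) n = (A + 1 + 2 * n) * (A + n) * (b + n) * A⁻¹ * qq A b n := by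
  have e1 := PP_shift_up b hb n
  have e2 := PP_shift_up A hA n
  have s1 : (1 : ℂ) - (b + 1) = -b := by ring
  have s2 : 1 + (A + 1) - (b + 1) = 1 + A - b := by ring
  have s3 : A + 1 + (b + 1) = A + b + 2 := by ring
  have s4 : A + 1 + 3 / 4 = A + 3 / 4 + 1 := by ring
  have s5 : A + 1 + 1 / 4 = A + 1 / 4 + 1 := by ring
  rw [tt, qq, s1, s2, s3, s4, s5, e1, e2, mul_div_right_comm (PP b n), mul_div_right_comm (PP A n)]
  generalize (n.factorial : ℂ) / PP (1 + A - b) n = i1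
  generalize (n.factorial : ℂ) / PP (A + b + 2) n = i2
  generalize (n.factorial : ℂ) / PP (A + 3 / 4 + 1) n = i3
  generalize (n.factorial : ℂ) / PP (A + 1 / 4 + 1) n = i4
  generalize PP (-b) n / (n.factorial : ℂ) = g1
  generalize PP b n / (n.factorial : ℂ) = g2
  generalize PP A n / (n.factorial : ℂ) = g3
  generalize PP (1 / 4) n / (n.factorial : ℂ) = g4
  generalize PP (3 / 4) n / (n.factorial : ℂ) = g5
  generalize (-1 : ℂ) ^ n = s
  generalize (n : ℂ) = x at *
  have c1 : b * ((b + x) / b) = b + x := mul_div_cancel₀ _ hb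
  have c2 : (A + 1) * (A + 1)⁻¹ = 1 := mul_inv_cancel₀ hA1
  calc _ = (A + 1 + 2 * x) * ((A + 1) * (A + 1)⁻¹) * s * (g3 * ((A + x) / A))
          * (g2 * (b * ((b + x) / b))) * g1 * g4 * g5 * i1 * i2 * i3 * i4 := by
        generalize (A + 1)⁻¹ = y1
        generalize (b + x) / b = y2
        ring
    _ = _ := by
        rw [c1, c2]; ring

lemma gg_succ (A b : ℂ) (n : ℕ) (hm : ∀ n : ℕ, 1 + A - b + n ≠ 0)
    (hp : ∀ n : ℕ, A + b + n ≠ 0) (h3 : ∀ n : ℕ, A + 3 / 4 + n ≠ 0)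
    (h1 : ∀ n : ℕ, A + 1 / 4 + n ≠ 0) :
    gg A b (n + 1) = -(A + n) * (b + n) * (-b + n) * (1 / 4 + n) * (3 / 4 + n) * (n + 1 + 2 * A + b)
      * qq A b n := by
  have hm' := hm n
  have hp' : A + b + 2 + n ≠ 0 := by
    intro h; apply hp (n + 2); push_cast; linear_combination h
  have h3' : A + 3 / 4 + 1 + n ≠ 0 := by
    intro h; apply h3 (n + 1); push_cast; linear_combination h
  have h1' : A + 1 / 4 + 1 + n ≠ 0 := by
    intro h; apply h1 (n + 1); push_cast; linear_combination h
  have hn : (n : ℂ) + 1 ≠ 0 := by exact_mod_cast n.succ_ne_zero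
  have key : qq A b (n + 1) * ((n + 1) * (1 + A - b + n) * (A + b + 2 + n) * (A + 3 / 4 + 1 + n)
      * (A + 1 / 4 + 1 + n)) =
      -(A + n) * (b + n) * (-b + n) * (1 / 4 + n) * (3 / 4 + n) * qq A b n := by
    simp only [qq, PP_succ, pow_succ, Nat.factorial_succ, Nat.cast_mul, Nat.cast_add, Nat.cast_one]
    have hf : (n.factorial : ℂ) ≠ 0 := by exact_mod_cast n.factorial_ne_zero
    have up : ∀ u y : ℂ, u * y / ((n + 1) * n.factorial) = u / n.factorial * (y / (n + 1)) := by
      intro u y; rw [mul_comm ((n : ℂ) + 1), mul_div_mul_comm]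
    have lo : ∀ u y : ℂ, ((n + 1) * n.factorial) / (u * y) = n.factorial / u * ((n + 1) / y) := by
      intro u y; rw [mul_comm ((n : ℂ) + 1), mul_div_mul_comm]
    simp only [up, lo]
    generalize (n.factorial : ℂ) / PP (1 + A - b) n = i1
    generalize (n.factorial : ℂ) / PP (A + b + 2) n = i2
    generalize (n.factorial : ℂ) / PP (A + 3 / 4 + 1) n = i3
    generalize (n.factorial : ℂ) / PP (A + 1 / 4 + 1) n = i4
    generalize PP (-b) n / (n.factorial : ℂ) = g1
    generalize PP b n / (n.factorial : ℂ) = g2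
    generalize PP A n / (n.factorial : ℂ) = g3
    generalize PP (1 / 4) n / (n.factorial : ℂ) = g4
    generalize PP (3 / 4) n / (n.factorial : ℂ) = g5
    generalize (-1 : ℂ) ^ n = s
    clear up lo hf
    generalize (n : ℂ) = x at *
    have c1 : (x + 1) / (1 + A - b + x) * (1 + A - b + x) = x + 1 := div_mul_cancel₀ _ hm'
    have c2 : (x + 1) / (A + b + 2 + x) * (A + b + 2 + x) = x + 1 := div_mul_cancel₀ _ hp'
    have c3 : (x + 1) / (A + 3 / 4 + 1 + x) * (A + 3 / 4 + 1 + x) = x + 1 := div_mul_cancel₀ _ h3'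
    have c4 : (x + 1) / (A + 1 / 4 + 1 + x) * (A + 1 / 4 + 1 + x) = x + 1 := div_mul_cancel₀ _ h1'
    calc _ = -(s * (g3 * ((A + x) / (x + 1))) * (g2 * ((b + x) / (x + 1)))
          * (g1 * ((-b + x) / (x + 1))) * (g4 * ((1 / 4 + x) / (x + 1)))
          * (g5 * ((3 / 4 + x) / (x + 1))) * (x + 1) * i1 * i2 * i3 * i4
          * ((x + 1) / (1 + A - b + x) * (1 + A - b + x))
          * ((x + 1) / (A + b + 2 + x) * (A + b + 2 + x))
          * ((x + 1) / (A + 3 / 4 + 1 + x) * (A + 3 / 4 + 1 + x))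
          * ((x + 1) / (A + 1 / 4 + 1 + x) * (A + 1 / 4 + 1 + x))) := by
          generalize (x + 1) / (1 + A - b + x) = y1
          generalize (x + 1) / (A + b + 2 + x) = y2
          generalize (x + 1) / (A + 3 / 4 + 1 + x) = y3
          generalize (x + 1) / (A + 1 / 4 + 1 + x) = y4
          ring
      _ = _ := by
          rw [c1, c2, c3, c4]
          have hw := mul_inv_cancel₀ hn
          simp only [div_eq_mul_inv _ (x + 1)]
          generalize (x + 1)⁻¹ = w at *
          calc _ = -((A + x) * (b + x) * (-b + x) * (1 / 4 + x) * (3 / 4 + x)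
                * (s * g3 * g2 * g1 * g4 * g5 * i1 * i2 * i3 * i4)) * ((x + 1) * w) ^ 5 := by ring
            _ = _ := by rw [hw]; ring
  rw [gg]
  push_cast
  linear_combination ((n : ℂ) + 1 + 2 * A + b) * key

noncomputable def rr (A b : ℂ) : ℂ :=
  A * (A + 1) * (A + b + 1 / 4) * (A + b + 3 / 4)
    / ((A + 3 / 4) * (A + 1 / 4) * (A + b) * (A + b + 1))

lemma telescope (A b : ℂ) (N : ℕ) (hb : b ≠ 0) (hA : ∀ n : ℕ, A + n ≠ 0)
    (hm : ∀ n : ℕ, 1 + A - b + n ≠ 0)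
    (hp : ∀ n : ℕ, A + b + n ≠ 0) (h3 : ∀ n : ℕ, A + 3 / 4 + n ≠ 0)
    (h1 : ∀ n : ℕ, A + 1 / 4 + n ≠ 0) :
    A * b * (A + b) * (A + b + 1) * (A + 3 / 4) * (A + 1 / 4) *
      ∑ n ∈ Finset.range N, (tt A b n - rr A b * tt (A + 1) (b + 1) n) = gg A b N := by
  have z0 : A ≠ 0 := by simpa using hA 0
  have z0' : A + 1 ≠ 0 := by simpa using hA 1
  have z1 : A + b ≠ 0 := by simpa using hp 0
  have z2 : A + b + 1 ≠ 0 := by simpa using hp 1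
  have z3 : A + 3 / 4 ≠ 0 := by simpa using h3 0
  have z4 : A + 1 / 4 ≠ 0 := by simpa using h1 0
  have hr : A * b * (A + b) * (A + b + 1) * (A + 3 / 4) * (A + 1 / 4) * rr A b =
      A ^ 2 * (A + b + 1 / 4) * (A + b + 3 / 4) * (b * (A + 1)) := by
    have : rr A b * ((A + 3 / 4) * (A + 1 / 4) * (A + b) * (A + b + 1)) =
      A * (A + 1) * (A + b + 1 / 4) * (A + b + 3 / 4) := by
      rw [rr, div_mul_cancel₀]
      exact mul_ne_zero (mul_ne_zero (mul_ne_zero z3 z4) z1) z2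
    linear_combination (A * b) * this
  induction N with
  | zero => simp [gg]
  | succ n ih =>
    have k1 := tt_eq A b n hb z0 hp h3 h1
    have k2 := tt_eq' A b n hb z0 z0'
    have k3 := gg_succ A b n hm hp h3 h1
    have k4 : A ^ 2 * A⁻¹ = A := by field_simp
    rw [Finset.sum_range_succ, mul_add, ih, k3, gg]
    generalize qq A b n = q at *
    generalize tt A b n = t1 at *
    generalize tt (A + 1) (b + 1) n = t2 at *
    generalize rr A b = r at *
    generalize (n : ℂ) = x at *
    generalize A⁻¹ = w at *
    have k5 : A ^ 2 * (A + b + 1 / 4) * (A + b + 3 / 4) * (b * (A + 1)) * t2 =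
        A * (A + b + 1 / 4) * (A + b + 3 / 4) * ((A + 1 + 2 * x) * (A + x) * (b + x) * q) := by
      calc _ = A ^ 2 * (A + b + 1 / 4) * (A + b + 3 / 4) * (b * (A + 1) * t2) := by ring
        _ = (A ^ 2 * w) * (A + b + 1 / 4) * (A + b + 3 / 4)
            * ((A + 1 + 2 * x) * (A + x) * (b + x) * q) := by rw [k2]; ring
        _ = _ := by rw [k4]
    rw [mul_sub, k1, ← mul_assoc, hr, k5]
    ring

lemma tt_at_zero (A b : ℂ) (hA : A ≠ 0) : tt A b 0 = 1 := by
  simp [tt, PP_zero, hA]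

lemma PP_zero_succ (n : ℕ) (hn : n ≠ 0) : PP 0 n = 0 :=
  Finset.prod_eq_zero (Finset.mem_range.2 (Nat.pos_of_ne_zero hn)) (by simp)

lemma tt_symm (A b : ℂ) : tt A (1 - b) = tt A b := by
  funext n
  have s1 : (1 : ℂ) - (1 - b) = b := by ring
  have s2 : 1 + A - (1 - b) = A + b := by ring
  have s3 : A + (1 - b) = 1 + A - b := by ring
  rw [tt, tt, s1, s2, s3]
  ring

lemma tsum_b_zero (A : ℂ) (hA : A ≠ 0) : ∑' n, tt A 0 n = 1 := by
  rw [tsum_eq_single 0, tt_at_zero A 0 hA]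
  intro n hn
  simp [tt, PP_zero_succ n hn]

lemma step (α : ℝ) (hα : 1 / 2 ≤ α) (b : ℂ) (hm : ∀ n : ℕ, 1 + (α : ℂ) - b + n ≠ 0)
    (hp : ∀ n : ℕ, (α : ℂ) + b + n ≠ 0) :
    ∑' n, tt α b n = rr α b * ∑' n, tt (α + 1) (b + 1) n := by
  have h3 : ∀ n : ℕ, (α : ℂ) + 3 / 4 + n ≠ 0 := by
    have := pos_ne (α := α + 3 / 4) (by linarith); push_cast at this; exact this
  have h1 : ∀ n : ℕ, (α : ℂ) + 1 / 4 + n ≠ 0 := by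
    have := pos_ne (α := α + 1 / 4) (by linarith); push_cast at this; exact this
  have hA : ∀ n : ℕ, (α : ℂ) + n ≠ 0 := pos_ne (by linarith)
  have z0 : (α : ℂ) ≠ 0 := by simpa using hA 0
  have z0' : (α : ℂ) + 1 ≠ 0 := by simpa using hA 1
  have z1 : (α : ℂ) + b ≠ 0 := by simpa using hp 0
  have z2 : (α : ℂ) + b + 1 ≠ 0 := by simpa using hp 1
  have z3 : (α : ℂ) + 3 / 4 ≠ 0 := by simpa using h3 0
  have z4 : (α : ℂ) + 1 / 4 ≠ 0 := by simpa using h1 0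
  by_cases hb : b = 0
  · subst hb
    have := tt_symm ((α : ℂ) + 1) 0
    rw [zero_add, tsum_b_zero _ z0]
    rw [sub_zero] at this
    rw [this, tsum_b_zero _ z0', mul_one, rr]
    simp only [add_zero]
    rw [eq_comm, div_eq_one_iff_eq]
    · ring
    · exact mul_ne_zero (mul_ne_zero (mul_ne_zero z3 z4) z0) z0'
  · have s1 := tt_summable α hα b hm hp
    have s2 : Summable (tt ((α : ℂ) + 1) (b + 1)) := by
      have := tt_summable (α + 1) (by linarith) (b + 1) (fun n h => hm n ?_)
        (fun n h => hp (n + 2) ?_)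
      · push_cast at this; exact this
      · push_cast at h; linear_combination h
      · push_cast at h ⊢; linear_combination h
    have s3 := (s1.hasSum.sub (s2.hasSum.mul_left (rr α b))).tendsto_sum_nat.const_mul
      (α * b * (α + b) * (α + b + 1) * (α + 3 / 4) * (α + 1 / 4))
    have s4 := gg_tendsto α hα b hm hp
    have s5 := tendsto_nhds_unique
      (s3.congr fun N => telescope α b N hb hA hm hp h3 h1) s4
    have : (α : ℂ) * b * (α + b) * (α + b + 1) * (α + 3 / 4) * (α + 1 / 4) ≠ 0 := by
      simp only [ne_eq, mul_eq_zero, not_or]; tauto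
    exact sub_eq_zero.1 ((mul_eq_zero.1 s5).resolve_left this)

lemma step2 (α : ℝ) (hα : 1 / 2 ≤ α) (b : ℂ) (hm : ∀ n : ℕ, 1 + (α : ℂ) - b + n ≠ 0)
    (hp : ∀ n : ℕ, (α : ℂ) + b + n ≠ 0) :
    ∑' n, tt α b n = rr α b * rr (α + 1) (-b) * ∑' n, tt (α + 2) b n := by
  rw [step α hα b hm hp]
  have e : tt ((α : ℂ) + 1) (b + 1) = tt (α + 1) (-b) := by
    rw [← tt_symm]; congr 1; ring
  have h := step (α + 1) (by linarith) (-b) (fun n h => hp (n + 2) ?_) (fun n h => hm n ?_)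
  · push_cast at h
    have e2 : tt ((α : ℂ) + 1 + 1) (-b + 1) = tt (α + 2) b := by
      rw [← tt_symm]; congr 1 <;> ring
    rw [e, h, e2, mul_assoc]
  · push_cast at h ⊢; linear_combination h
  · push_cast at h ⊢; linear_combination h

lemma PP_two (x : ℂ) (h0 : x ≠ 0) (h1 : x + 1 ≠ 0) (n : ℕ) :
    PP (x + 2) n = PP x n * ((x + n) / x * ((x + 1 + n) / (x + 1))) := by
  have : x + 2 = x + 1 + 1 := by ring
  rw [this, PP_shift_up _ h1, PP_shift_up _ h0, mul_assoc]

lemma PP_two_low (x : ℂ) (h : ∀ n : ℕ, x + n ≠ 0) (n : ℕ) (f : ℂ) :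
    f / PP (x + 2) n = f / PP x n * (x / (x + n) * ((x + 1) / (x + 1 + n))) := by
  have h0 : x ≠ 0 := by simpa using h 0
  have h1 : x + 1 ≠ 0 := by simpa using h 1
  rw [PP_two x h0 h1, ← div_div, div_eq_mul_inv (f / PP x n), mul_inv, inv_div, inv_div]

lemma norm_quot_le (y : ℂ) (hy : 0 < y.re) (n : ℕ) : ‖y / (y + n)‖ ≤ 1 := by
  have hne : y + n ≠ 0 := by
    intro h
    have := congrArg Complex.re h
    simp at this
    have : (0 : ℝ) ≤ n := by positivity
    linarith
  rw [norm_div, div_le_one (norm_pos_iff.2 hne), ← sq_le_sq₀ (norm_nonneg _) (norm_nonneg _),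
    Complex.sq_norm, Complex.sq_norm, normSq_apply, normSq_apply]
  simp
  have : (0 : ℝ) ≤ n := by positivity
  nlinarith

lemma re_ne {y : ℂ} (hy : 0 < y.re) (n : ℕ) : y + n ≠ 0 := by
  intro h
  have := congrArg Complex.re h
  simp at this
  have : (0 : ℝ) ≤ n := by positivity
  linarith

lemma tt_mono (α : ℝ) (hα : 1 ≤ α) (b : ℂ) (hm : 0 < (1 + (α : ℂ) - b).re)
    (hp : 0 < ((α : ℂ) + b).re) (k : ℕ) : ‖tt (α + 2) b k‖ ≤ ‖tt α b k‖ := by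
  have h3 : ∀ n : ℕ, (α : ℂ) + 3 / 4 + n ≠ 0 := by
    have := pos_ne (α := α + 3 / 4) (by linarith); push_cast at this; exact this
  have h1 : ∀ n : ℕ, (α : ℂ) + 1 / 4 + n ≠ 0 := by
    have := pos_ne (α := α + 1 / 4) (by linarith); push_cast at this; exact this
  have hA : ∀ n : ℕ, (α : ℂ) + n ≠ 0 := pos_ne (by linarith)
  have z0 : (α : ℂ) ≠ 0 := by simpa using hA 0
  have z0' : (α : ℂ) + 1 ≠ 0 := by simpa using hA 1
  have hA2 : (α : ℂ) + 2 * k ≠ 0 := by have := hA (2 * k); push_cast at this; exact this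
  have hk : (0 : ℝ) ≤ k := by positivity
  set ρ1 : ℝ := (α + 2 + 2 * k) / (α + 2) * (α / (α + 2 * k)) with hρ1
  set ρ2 : ℝ := (α + k) / α * ((α + 1 / 4) / (α + 1 / 4 + k) *
    ((α + 1 / 4 + 1) / (α + 1 / 4 + 1 + k))) with hρ2
  set ρ3 : ℝ := (α + 1 + k) / (α + 1) * ((α + 3 / 4) / (α + 3 / 4 + k) *
    ((α + 3 / 4 + 1) / (α + 3 / 4 + 1 + k))) with hρ3
  have b1 : |ρ1| ≤ 1 := by
    rw [abs_of_nonneg (by positivity), hρ1, div_mul_div_comm, div_le_one (by positivity)]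
    nlinarith
  have b2 : |ρ2| ≤ 1 := by
    rw [abs_of_nonneg (by positivity), hρ2, div_mul_div_comm, div_mul_div_comm,
      div_le_one (by positivity)]
    have : 0 ≤ α * k * (α - 1) := mul_nonneg (by positivity) (by linarith)
    have : 0 ≤ α * k * k := by positivity
    nlinarith
  have b3 : |ρ3| ≤ 1 := by
    rw [abs_of_nonneg (by positivity), hρ3, div_mul_div_comm, div_mul_div_comm,
      div_le_one (by positivity)]
    have : 0 ≤ α * k * (α - 1) := mul_nonneg (by positivity) (by linarith)
    have : 0 ≤ α * k * k := by positivity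
    nlinarith
  set y : ℂ := 1 + (α : ℂ) - b with hy
  set w : ℂ := (α : ℂ) + b with hw
  have key : tt (α + 2) b k = tt α b k * ((ρ1 * ρ2 * ρ3) * (y / (y + k) * ((y + 1) / (y + 1 + k)))
      * (w / (w + k) * ((w + 1) / (w + 1 + k)))) := by
    have e1 : 1 + ((α : ℂ) + 2) - b = y + 2 := by rw [hy]; ring
    have e2 : (α : ℂ) + 2 + b = w + 2 := by rw [hw]; ring
    have e3 : (α : ℂ) + 2 + 3 / 4 = α + 3 / 4 + 2 := by ring
    have e4 : (α : ℂ) + 2 + 1 / 4 = α + 1 / 4 + 2 := by ring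
    have e5 : ((α : ℂ) + 2 + 2 * k) * ((α : ℂ) + 2)⁻¹ = (α + 2 * k) * (α : ℂ)⁻¹ * ρ1 := by
      have : (α : ℂ) + 2 ≠ 0 := by simpa using hA 2
      rw [hρ1]; push_cast; field_simp
    have e6 : ((ρ2 : ℝ) : ℂ) = (α + k) / α * ((α + 1 / 4) / (α + 1 / 4 + k) *
      ((α + 1 / 4 + 1) / (α + 1 / 4 + 1 + k))) := by rw [hρ2]; push_cast; ring
    have e7 : ((ρ3 : ℝ) : ℂ) = (α + 1 + k) / (α + 1) * ((α + 3 / 4) / (α + 3 / 4 + k) *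
      ((α + 3 / 4 + 1) / (α + 3 / 4 + 1 + k))) := by rw [hρ3]; push_cast; ring
    rw [tt, tt, e1, e2, e3, e4, e5, e6, e7, PP_two _ z0 z0', PP_two_low _ (re_ne hm),
      PP_two_low _ (re_ne hp), PP_two_low _ h3, PP_two_low _ h1, ← hy, ← hw,
      mul_div_right_comm (PP (α : ℂ) k)]
    generalize (k.factorial : ℂ) / PP y k = i1
    generalize (k.factorial : ℂ) / PP w k = i2
    generalize (k.factorial : ℂ) / PP (α + 3 / 4) k = i3
    generalize (k.factorial : ℂ) / PP (α + 1 / 4) k = i4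
    generalize y / (y + k) * ((y + 1) / (y + 1 + k)) = j1
    generalize w / (w + k) * ((w + 1) / (w + 1 + k)) = j2
    generalize ((α : ℂ) + 1 / 4) / (α + 1 / 4 + k) * ((α + 1 / 4 + 1) / (α + 1 / 4 + 1 + k)) = j3
    generalize ((α : ℂ) + 3 / 4) / (α + 3 / 4 + k) * ((α + 3 / 4 + 1) / (α + 3 / 4 + 1 + k)) = j4
    generalize ((α : ℂ) + k) / α = j5
    generalize ((α : ℂ) + 1 + k) / (α + 1) = j6
    ring
  have n1 : ‖y / (y + k) * ((y + 1) / (y + 1 + k))‖ ≤ 1 := by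
    rw [norm_mul]
    exact mul_le_one₀ (norm_quot_le _ hm _) (norm_nonneg _)
      (norm_quot_le _ (by rw [add_re, one_re]; linarith) _)
  have n2 : ‖w / (w + k) * ((w + 1) / (w + 1 + k))‖ ≤ 1 := by
    rw [norm_mul]
    exact mul_le_one₀ (norm_quot_le _ hp _) (norm_nonneg _)
      (norm_quot_le _ (by rw [add_re, one_re]; linarith) _)
  have n3 : ‖(ρ1 * ρ2 * ρ3 : ℂ)‖ ≤ 1 := by
    rw [norm_mul, norm_mul, norm_real, norm_real, norm_real]
    exact mul_le_one₀ (mul_le_one₀ b1 (norm_nonneg _) b2) (norm_nonneg _) b3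
  rw [key, norm_mul]
  refine mul_le_of_le_one_right (norm_nonneg _) ?_
  rw [norm_mul, norm_mul]
  exact mul_le_one₀ (mul_le_one₀ n3 (norm_nonneg _) n1) (norm_nonneg _) n2

/-- parameter sequence -/
noncomputable def al (n : ℕ) : ℝ := 1 / 2 + 2 * n

lemma al_succ (n : ℕ) : ((al (n + 1) : ℝ) : ℂ) = (al n : ℂ) + 2 := by
  simp only [al]; push_cast; ring

lemma al_ge (n : ℕ) : 1 / 2 ≤ al n := by
  simp only [al]; linarith [Nat.cast_nonneg (α := ℝ) n]

lemma al_add_tendsto_inv (c : ℂ) : Tendsto (fun n : ℕ => ((al n : ℂ) + c)⁻¹) atTop (𝓝 0) := by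
  apply tendsto_inv₀_cobounded.comp
  rw [← tendsto_norm_atTop_iff_cobounded]
  have h : Tendsto (fun n : ℕ => (n : ℝ) - ‖c‖) atTop atTop :=
    tendsto_atTop_add_const_right _ _ tendsto_natCast_atTop_atTop
  refine tendsto_atTop_mono (fun n => ?_) h
  have h1 := norm_sub_le ((al n : ℂ) + c) c
  rw [add_sub_cancel_right, norm_real, Real.norm_of_nonneg (by linarith [al_ge n])] at h1
  have : (n : ℝ) ≤ al n := by simp only [al]; linarith [Nat.cast_nonneg (α := ℝ) n]
  linarith

lemma al_quot_tendsto (c e : ℂ) :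
    Tendsto (fun n : ℕ => ((al n : ℂ) + c) * ((al n : ℂ) + e)⁻¹) atTop (𝓝 1) := by
  have h := ((al_add_tendsto_inv e).const_mul (c - e)).const_add 1
  rw [mul_zero, add_zero] at h
  refine h.congr' ?_
  have h2 : ∀ᶠ n : ℕ in atTop, (al n : ℂ) + e ≠ 0 := by
    filter_upwards [eventually_gt_atTop ⌈‖e‖⌉₊] with n hn h0
    have h1 : (al n : ℂ) = -e := eq_neg_of_add_eq_zero_left h0
    have h2 := congrArg norm h1
    rw [norm_real, Real.norm_of_nonneg (by linarith [al_ge n]), norm_neg] at h2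
    have h3 : ‖e‖ < n := Nat.lt_of_ceil_lt hn
    have : (n : ℝ) ≤ al n := by simp only [al]; linarith [Nat.cast_nonneg (α := ℝ) n]
    linarith
  filter_upwards [h2] with n hn
  field_simp
  ring

lemma tt_pointwise (b : ℂ) (k : ℕ) (hk : k ≠ 0) :
    Tendsto (fun n : ℕ => tt (al n) b k) atTop (𝓝 0) := by
  have inv : ∀ c : ℂ, Tendsto (fun n : ℕ => (PP ((al n : ℂ) + c) k)⁻¹) atTop (𝓝 0) := by
    intro c
    have : Tendsto (fun n : ℕ => ∏ j ∈ Finset.range k, ((al n : ℂ) + (c + j))⁻¹) atTop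
        (𝓝 (∏ j ∈ Finset.range k, 0)) :=
      tendsto_finsetProd _ fun j _ => al_add_tendsto_inv _
    rw [Finset.prod_const, Finset.card_range, zero_pow hk] at this
    refine this.congr fun n => ?_
    simp only [PP, add_assoc, Finset.prod_inv_distrib]
  have quo : Tendsto (fun n : ℕ => PP (al n : ℂ) k * (PP ((al n : ℂ) + 3 / 4) k)⁻¹) atTop
      (𝓝 1) := by
    have : Tendsto (fun n : ℕ => ∏ j ∈ Finset.range k,
        (((al n : ℂ) + j) * ((al n : ℂ) + (3 / 4 + j))⁻¹)) atTop
        (𝓝 (∏ j ∈ Finset.range k, 1)) :=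
      tendsto_finsetProd _ fun j _ => al_quot_tendsto _ _
    rw [Finset.prod_const_one] at this
    refine this.congr fun n => ?_
    simp only [PP, add_assoc, Finset.prod_inv_distrib, Finset.prod_mul_distrib]
  have h := (((((al_quot_tendsto (2 * k) 0).mul quo).mul (inv (1 - b))).mul (inv b)).mul
    (inv (1 / 4))).mul_const ((-1) ^ k * (PP b k / k.factorial)
    * (PP (1 - b) k / k.factorial) * (PP (1 / 4) k / k.factorial) * (PP (3 / 4) k / k.factorial)
    / k.factorial * k.factorial ^ 4)
  simp only [mul_zero, zero_mul] at h
  refine h.congr fun n => ?_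
  have e : 1 + (al n : ℂ) - b = al n + (1 - b) := by ring
  rw [tt, e, add_zero]
  ring

lemma S_tendsto (a : ℂ) (hp : ∀ n : ℕ, 1 + a + n ≠ 0) (hm : ∀ n : ℕ, 1 - a + n ≠ 0) :
    Tendsto (fun n : ℕ => ∑' k, tt (al n) (1 / 2 + a) k) atTop (𝓝 1) := by
  obtain ⟨n0, hn0⟩ := exists_nat_gt (‖a‖ + 1)
  have hre := abs_le.1 (Complex.abs_re_le_norm a)
  have hal : ∀ n : ℕ, 1 + (al n : ℂ) - (1 / 2 + a) = 1 - a + 2 * n := by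
    intro n; simp only [al]; push_cast; ring
  have hal' : ∀ n : ℕ, (al n : ℂ) + (1 / 2 + a) = 1 + a + 2 * n := by
    intro n; simp only [al]; push_cast; ring
  have hr : ∀ n : ℕ, (2 * (n : ℂ)).re = 2 * n := by intro n; simp
  have mono : ∀ n, n0 ≤ n → ∀ k, ‖tt (al n) (1 / 2 + a) k‖ ≤ ‖tt (al n0) (1 / 2 + a) k‖ := by
    intro n hn
    induction n, hn using Nat.le_induction with
    | base => intro k; exact le_rfl
    | succ n hn ih =>
      intro k
      have hn' : (n0 : ℝ) ≤ n := by exact_mod_cast hn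
      refine le_trans ?_ (ih k)
      rw [al_succ]
      apply tt_mono
      · simp only [al]; nlinarith [norm_nonneg a]
      · rw [hal, add_re, hr, sub_re, one_re]; nlinarith [norm_nonneg a]
      · rw [hal', add_re, hr, add_re, one_re]; nlinarith [norm_nonneg a]
  have hs : Summable (fun k => ‖tt (al n0) (1 / 2 + a) k‖) := by
    apply Summable.norm
    apply tt_summable _ (al_ge _)
    · intro n h; rw [hal] at h; apply hm (2 * n0 + n); push_cast; linear_combination h
    · intro n h; rw [hal'] at h; apply hp (2 * n0 + n); push_cast; linear_combination h
  have hlim := tendsto_tsum_of_dominated_convergence (𝓕 := atTop)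
    (f := fun (n : ℕ) k => tt (al n) (1 / 2 + a) k) (g := fun k => if k = 0 then (1 : ℂ) else 0)
    hs ?_ ?_
  · simpa using hlim
  · intro k
    by_cases hk : k = 0
    · subst hk
      simp only [if_true]
      refine tendsto_const_nhds.congr fun n => (tt_at_zero _ _ ?_).symm
      simpa using pos_ne (α := al n) (by linarith [al_ge n]) 0
    · simp only [hk, if_false]
      exact tt_pointwise _ k hk
  · filter_upwards [eventually_ge_atTop n0] with n hn k
    exact mono n hn k

noncomputable def FN (a : ℂ) (N : ℕ) : ℂ :=
  (PP (1 / 4) N * PP (3 / 4) N * PP (3 / 4) N * PP (5 / 4) N * PP (a / 2 + 5 / 8) N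
    * PP (a / 2 + 7 / 8) N * PP (-a / 2 + 5 / 8) N * PP (-a / 2 + 7 / 8) N)
  / (PP (5 / 8) N * PP (3 / 8) N * PP (9 / 8) N * PP (7 / 8) N * PP (1 / 2 + a / 2) N
    * PP (1 + a / 2) N * PP (1 / 2 - a / 2) N * PP (1 - a / 2) N)

lemma FN_succ (a : ℂ) (n : ℕ) :
    FN a (n + 1) = FN a n * (rr (al n) (1 / 2 + a) * rr (al n + 1) (-(1 / 2 + a))) := by
  have e : rr (al n) (1 / 2 + a) * rr (al n + 1) (-(1 / 2 + a)) =
      ((1 / 4 + n) * (3 / 4 + n) * (3 / 4 + n) * (5 / 4 + n) * (a / 2 + 5 / 8 + n)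
        * (a / 2 + 7 / 8 + n) * (-a / 2 + 5 / 8 + n) * (-a / 2 + 7 / 8 + n))
      / ((5 / 8 + n) * (3 / 8 + n) * (9 / 8 + n) * (7 / 8 + n) * (1 / 2 + a / 2 + n)
        * (1 + a / 2 + n) * (1 / 2 - a / 2 + n) * (1 - a / 2 + n)) := by
    have h2 : (2 : ℂ) ^ 8 ≠ 0 := by norm_num
    rw [rr, rr, div_mul_div_comm]
    refine Eq.trans ?_ (mul_div_mul_left _ _ h2)
    simp only [al]
    push_cast
    congr 1
    · ring
    · ring
  rw [e, FN, FN, div_mul_div_comm]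
  simp only [PP_succ]
  congr 1 <;> ring

lemma S_eq (a : ℂ) (hp : ∀ n : ℕ, 1 + a + n ≠ 0) (hm : ∀ n : ℕ, 1 - a + n ≠ 0) (N : ℕ) :
    ∑' k, tt (al 0) (1 / 2 + a) k = FN a N * ∑' k, tt (al N) (1 / 2 + a) k := by
  induction N with
  | zero => simp [FN, PP_zero]
  | succ n ih =>
    rw [ih, step2 (al n) (al_ge n) (1 / 2 + a), FN_succ, al_succ, ← mul_assoc]
    · intro m h; apply hm (2 * n + m); simp only [al] at h; push_cast at h ⊢; linear_combination h
    · intro m h; apply hp (2 * n + m); simp only [al] at h; push_cast at h ⊢; linear_combination h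

lemma eight_mul (p1 p2 p3 p4 p5 p6 p7 p8 c1 c2 c3 c4 c5 c6 c7 c8 n f : ℂ) :
    p1 * n / (c1 * f) * (p2 * n / (c2 * f)) * (p3 * n / (c3 * f)) * (p4 * n / (c4 * f))
      * (p5 * n / (c5 * f)) * (p6 * n / (c6 * f)) * (p7 * n / (c7 * f)) * (p8 * n / (c8 * f))
    = p1 * p2 * p3 * p4 * p5 * p6 * p7 * p8
      * (n ^ 8 / (c1 * c2 * c3 * c4 * c5 * c6 * c7 * c8 * f ^ 8)) := by
  rw [← mul_div_assoc]
  simp only [div_mul_div_comm]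
  congr 1 <;> ring

lemma FN_tendsto (a : ℂ) (h1 : ∀ n : ℕ, 1 / 2 + a / 2 + n ≠ 0) (h2 : ∀ n : ℕ, 1 + a / 2 + n ≠ 0)
    (h3 : ∀ n : ℕ, 1 / 2 - a / 2 + n ≠ 0) (h4 : ∀ n : ℕ, 1 - a / 2 + n ≠ 0) :
    Tendsto (FN a) atTop (𝓝 (
    ((Gamma (1 / 4))⁻¹ * (Gamma (3 / 4))⁻¹ * (Gamma (3 / 4))⁻¹ * (Gamma (5 / 4))⁻¹
      * (Gamma (a / 2 + 5 / 8))⁻¹ * (Gamma (a / 2 + 7 / 8))⁻¹ * (Gamma (-a / 2 + 5 / 8))⁻¹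
      * (Gamma (-a / 2 + 7 / 8))⁻¹)
    / ((Gamma (5 / 8))⁻¹ * (Gamma (3 / 8))⁻¹ * (Gamma (9 / 8))⁻¹ * (Gamma (7 / 8))⁻¹
      * (Gamma (1 / 2 + a / 2))⁻¹ * (Gamma (1 + a / 2))⁻¹ * (Gamma (1 / 2 - a / 2))⁻¹
      * (Gamma (1 - a / 2))⁻¹))) := by
  have gz : ∀ y : ℂ, (∀ n : ℕ, y + n ≠ 0) → (Gamma y)⁻¹ ≠ 0 := fun y hy =>
    inv_ne_zero (Gamma_ne_zero fun m h => hy m (by rw [h]; ring))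
  have gp : ∀ y : ℂ, 0 < y.re → (Gamma y)⁻¹ ≠ 0 := fun y hy =>
    inv_ne_zero (Gamma_ne_zero_of_re_pos hy)
  have hnum := (((((((PP_tendsto (1 / 4)).mul (PP_tendsto (3 / 4))).mul (PP_tendsto (3 / 4))).mul
    (PP_tendsto (5 / 4))).mul (PP_tendsto (a / 2 + 5 / 8))).mul (PP_tendsto (a / 2 + 7 / 8))).mul
    (PP_tendsto (-a / 2 + 5 / 8))).mul (PP_tendsto (-a / 2 + 7 / 8))
  have hden := (((((((PP_tendsto (5 / 8)).mul (PP_tendsto (3 / 8))).mul (PP_tendsto (9 / 8))).mul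
    (PP_tendsto (7 / 8))).mul (PP_tendsto (1 / 2 + a / 2))).mul (PP_tendsto (1 + a / 2))).mul
    (PP_tendsto (1 / 2 - a / 2))).mul (PP_tendsto (1 - a / 2))
  refine (hnum.div hden ?_).congr' ?_
  · have g1 := gp (5 / 8) (by norm_num)
    have g2 := gp (3 / 8) (by norm_num)
    have g3 := gp (9 / 8) (by norm_num)
    have g4 := gp (7 / 8) (by norm_num)
    exact mul_ne_zero (mul_ne_zero (mul_ne_zero (mul_ne_zero (mul_ne_zero (mul_ne_zero
      (mul_ne_zero g1 g2) g3) g4) (gz _ h1)) (gz _ h2)) (gz _ h3)) (gz _ h4)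
  · filter_upwards [eventually_gt_atTop 0] with n hn
    have hn0 : (n : ℂ) ≠ 0 := by exact_mod_cast hn.ne'
    have hf : (n.factorial : ℂ) ≠ 0 := by exact_mod_cast n.factorial_ne_zero
    have hc : ∀ x : ℂ, (n : ℂ) ^ x ≠ 0 := fun x => by simp [cpow_eq_zero_iff, hn0]
    have e1 : (n : ℂ) ^ (1 / 4 : ℂ) * n ^ (3 / 4 : ℂ) * n ^ (3 / 4 : ℂ) * n ^ (5 / 4 : ℂ)
        * n ^ (a / 2 + 5 / 8) * n ^ (a / 2 + 7 / 8) * n ^ (-a / 2 + 5 / 8) * n ^ (-a / 2 + 7 / 8)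
        = (n : ℂ) ^ (6 : ℂ) := by
      simp only [← cpow_add _ _ hn0]; congr 1; ring
    have e2 : (n : ℂ) ^ (5 / 8 : ℂ) * n ^ (3 / 8 : ℂ) * n ^ (9 / 8 : ℂ) * n ^ (7 / 8 : ℂ)
        * n ^ (1 / 2 + a / 2) * n ^ (1 + a / 2) * n ^ (1 / 2 - a / 2) * n ^ (1 - a / 2)
        = (n : ℂ) ^ (6 : ℂ) := by
      simp only [← cpow_add _ _ hn0]; congr 1; ring
    have hK : (n : ℂ) ^ 8 / ((n : ℂ) ^ (6 : ℂ) * n.factorial ^ 8) ≠ 0 :=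
      div_ne_zero (pow_ne_zero _ hn0) (mul_ne_zero (hc _) (pow_ne_zero _ hf))
    rw [FN]
    refine Eq.trans ?_ (mul_div_mul_right _ _ hK)
    simp only [Pi.div_apply]
    congr 1
    · rw [← e1]; exact eight_mul _ _ _ _ _ _ _ _ _ _ _ _ _ _ _ _ _ _
    · rw [← e2]; exact eight_mul _ _ _ _ _ _ _ _ _ _ _ _ _ _ _ _ _ _

lemma two_cpow_mul (x y : ℂ) (h : x + y = 0) : (2 : ℂ) ^ x * (2 : ℂ) ^ y = 1 := by
  rw [← cpow_add _ _ two_ne_zero, h, cpow_zero]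

lemma sqrt_pi_sq : ((√Real.pi : ℝ) : ℂ) * ((√Real.pi : ℝ) : ℂ) = Real.pi := by
  rw [← ofReal_mul, Real.mul_self_sqrt Real.pi_pos.le]

lemma const_gamma : Gamma (5 / 8) * Gamma (3 / 8) * Gamma (9 / 8) * Gamma (7 / 8) * (Real.sqrt 2 : ℂ)
    = Gamma (1 / 4) * Gamma (3 / 4) * Gamma (3 / 4) * Gamma (5 / 4) := by
  have d1 := Gamma_mul_Gamma_add_half (3 / 8)
  have d2 := Gamma_mul_Gamma_add_half (5 / 8)
  have r := Gamma_mul_Gamma_one_sub (1 / 4)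
  rw [show (3 / 8 : ℂ) + 1 / 2 = 7 / 8 by norm_num, show (2 : ℂ) * (3 / 8) = 3 / 4 by norm_num] at d1
  rw [show (5 / 8 : ℂ) + 1 / 2 = 9 / 8 by norm_num, show (2 : ℂ) * (5 / 8) = 5 / 4 by norm_num] at d2
  rw [show (1 : ℂ) - 1 / 4 = 3 / 4 by norm_num] at r
  have hs : sin ((Real.pi : ℂ) * (1 / 4)) = ((√2 / 2 : ℝ) : ℂ) := by
    rw [← Real.sin_pi_div_four, ofReal_sin]; congr 1; push_cast; ring
  have h2 : ((√2 : ℝ) : ℂ) * ((√2 : ℝ) : ℂ) = 2 := by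
    rw [← ofReal_mul, Real.mul_self_sqrt (by norm_num)]; norm_num
  have h2ne : ((√2 : ℝ) : ℂ) ≠ 0 := by
    intro h; rw [h] at h2; norm_num at h2
  have r2 : Gamma (1 / 4) * Gamma (3 / 4) = Real.pi * ((√2 : ℝ) : ℂ) := by
    rw [r, hs, div_eq_iff (by push_cast; exact div_ne_zero h2ne two_ne_zero)]
    push_cast
    linear_combination (-(Real.pi : ℂ) / 2) * h2
  have p := two_cpow_mul (1 - 3 / 4) (1 - 5 / 4) (by norm_num)
  calc _ = (Gamma (3 / 8) * Gamma (7 / 8)) * (Gamma (5 / 8) * Gamma (9 / 8)) * ((√2 : ℝ) : ℂ) := by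
        ring_nf
    _ = (Gamma (3 / 4) * Gamma (5 / 4)) * ((2 : ℂ) ^ (1 - 3 / 4 : ℂ) * (2 : ℂ) ^ (1 - 5 / 4 : ℂ))
        * (((√Real.pi : ℝ) : ℂ) * ((√Real.pi : ℝ) : ℂ)) * ((√2 : ℝ) : ℂ) := by
        rw [d1, d2]; ac_rfl
    _ = (Gamma (3 / 4) * Gamma (5 / 4)) * (Real.pi * ((√2 : ℝ) : ℂ)) := by
        rw [p, sqrt_pi_sq]; ring_nf
    _ = _ := by rw [← r2]; ac_rfl

lemma a_gamma (a : ℂ) : Gamma (1 / 2 + a / 2) * Gamma (1 + a / 2) * Gamma (1 / 2 - a / 2)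
    * Gamma (1 - a / 2) = Real.pi * Gamma (1 + a) * Gamma (1 - a) := by
  have d1 := Gamma_mul_Gamma_add_half (1 / 2 + a / 2)
  have d2 := Gamma_mul_Gamma_add_half (1 / 2 - a / 2)
  rw [show 1 / 2 + a / 2 + 1 / 2 = 1 + a / 2 by ring, show 2 * (1 / 2 + a / 2) = 1 + a by ring] at d1
  rw [show 1 / 2 - a / 2 + 1 / 2 = 1 - a / 2 by ring, show 2 * (1 / 2 - a / 2) = 1 - a by ring] at d2
  have p := two_cpow_mul (1 - (1 + a)) (1 - (1 - a)) (by ring)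
  rw [mul_assoc (Gamma _ * Gamma _), d1, d2]
  calc _ = Gamma (1 + a) * Gamma (1 - a) * ((2 : ℂ) ^ (1 - (1 + a)) * (2 : ℂ) ^ (1 - (1 - a)))
        * (((√Real.pi : ℝ) : ℂ) * ((√Real.pi : ℝ) : ℂ)) := by ac_rfl
    _ = _ := by rw [p, sqrt_pi_sq, mul_one, mul_comm, ← mul_assoc]

lemma term_eq (a : ℂ) (k : ℕ) :
    hypCoeff ![1 / 2, 1 / 2 + a, 1 / 2 - a] ![1, 1 + a, 1 - a] k * (-1 : ℂ) ^ k
      = tt (al 0) (1 / 2 + a) k := by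
  have e0 : ((al 0 : ℝ) : ℂ) = 1 / 2 := by simp [al]
  rw [hypCoeff, Fin.prod_univ_three, Fin.prod_univ_three, tt, e0,
    show (1 : ℂ) - (1 / 2 + a) = 1 / 2 - a by ring,
    show (1 : ℂ) + 1 / 2 - (1 / 2 + a) = 1 - a by ring,
    show (1 : ℂ) / 2 + (1 / 2 + a) = 1 + a by ring,
    show (1 : ℂ) / 2 + 3 / 4 = 1 / 4 + 1 by norm_num,
    show (1 : ℂ) / 2 + 1 / 4 = 3 / 4 by norm_num,
    PP_shift_up (1 / 4) (by norm_num)]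
  simp only [PP_eval, Matrix.cons_val_zero, Matrix.cons_val_one, Matrix.cons_val]
  rw [PP_one]
  have hf : (k.factorial : ℂ) ≠ 0 := by exact_mod_cast k.factorial_ne_zero
  have h14 : ∀ n : ℕ, (1 / 4 : ℂ) + n ≠ 0 := by
    have := pos_ne (α := 1 / 4) (by norm_num); push_cast at this; exact this
  have h34 : ∀ n : ℕ, (3 / 4 : ℂ) + n ≠ 0 := by
    have := pos_ne (α := 3 / 4) (by norm_num); push_cast at this; exact this
  have g1 := PP_ne _ h14 k
  have g3 := PP_ne _ h34 k
  have g2 := h14 k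
  generalize PP (1 / 4) k = p1 at *
  generalize PP (3 / 4) k = p3 at *
  generalize (k.factorial : ℂ) = f at *
  have c1 : p1 / f * (f / (p1 * ((1 / 4 + k) / (1 / 4)))) * (1 / 2 + 2 * k) * (1 / 2)⁻¹ = 1 := by
    have : (1 / 2 + 2 * k : ℂ) = 2 * (1 / 4 + k) := by ring
    rw [this]
    generalize (1 / 4 + k : ℂ) = z at *
    field_simp
    norm_num
  have c2 : p3 / f * (f / p3) = 1 := by field_simp
  have c3 : f / f = 1 := div_self hf
  generalize PP (1 / 2) k = u1
  generalize PP (1 / 2 + a) k = u2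
  generalize PP (1 / 2 - a) k = u3
  generalize PP (1 + a) k = v2
  generalize PP (1 - a) k = v3
  calc _ = (-1) ^ k * (u1 / f * u2 * u3 * v2⁻¹ * v3⁻¹) * 1 * 1 * (1 * 1) := by
        rw [div_eq_mul_inv, mul_inv, mul_inv]; ring
    _ = (-1) ^ k * (u1 / f * u2 * u3 * v2⁻¹ * v3⁻¹)
        * (p1 / f * (f / (p1 * ((1 / 4 + k) / (1 / 4)))) * (1 / 2 + 2 * k) * (1 / 2)⁻¹)
        * (p3 / f * (f / p3)) * (f / f * (f / f)) := by rw [c1, c2, c3]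
    _ = _ := by
        generalize f / (p1 * ((1 / 4 + k) / (1 / 4))) = w1
        generalize f / p3 = w2
        ring

lemma final_alg (g1 g2 g3 x1 x2 x3 x4 y1 y2 y3 y4 y5 y6 y7 y8 s : ℂ)
    (h : (y1 * y2 * y3 * y4) / (g1 * g2 * g2 * g3) = s⁻¹) :
    (g1⁻¹ * g2⁻¹ * g2⁻¹ * g3⁻¹ * x1⁻¹ * x2⁻¹ * x3⁻¹ * x4⁻¹)
      / (y1⁻¹ * y2⁻¹ * y3⁻¹ * y4⁻¹ * y5⁻¹ * y6⁻¹ * y7⁻¹ * y8⁻¹)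
    = (y5 * y6 * y7 * y8) / (s * x1 * x2 * x3 * x4) := by
  have e : (g1⁻¹ * g2⁻¹ * g2⁻¹ * g3⁻¹ * x1⁻¹ * x2⁻¹ * x3⁻¹ * x4⁻¹)
      / (y1⁻¹ * y2⁻¹ * y3⁻¹ * y4⁻¹ * y5⁻¹ * y6⁻¹ * y7⁻¹ * y8⁻¹)
      = ((y1 * y2 * y3 * y4) / (g1 * g2 * g2 * g3)) * (y5 * y6 * y7 * y8)
        * (x1 * x2 * x3 * x4)⁻¹ := by
    simp only [div_eq_mul_inv, mul_inv, inv_inv]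
    ac_rfl
  rw [e, h]
  simp only [div_eq_mul_inv, mul_inv]
  ring

theorem stmt14 (a : ℂ) (ha : ¬ ∃ k : ℤ, k ≠ 0 ∧ a = (k : ℂ))
    (h1 : ¬ IsNonposInt (a / 2 + 5 / 8)) (h2 : ¬ IsNonposInt (a / 2 + 7 / 8))
    (h3 : ¬ IsNonposInt (-a / 2 + 5 / 8)) (h4 : ¬ IsNonposInt (-a / 2 + 7 / 8)) :
    Summable (fun k : ℕ =>
      hypCoeff ![1 / 2, 1 / 2 + a, 1 / 2 - a] ![1, 1 + a, 1 - a] k * (-1 : ℂ) ^ k) ∧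
    cHyp ![1 / 2, 1 / 2 + a, 1 / 2 - a] ![1, 1 + a, 1 - a] (-1)
      = (Real.pi : ℂ) * Gamma (1 + a) * Gamma (1 - a)
          / ((Real.sqrt 2 : ℂ) * Gamma (a / 2 + 5 / 8) * Gamma (a / 2 + 7 / 8)
            * Gamma (-a / 2 + 5 / 8) * Gamma (-a / 2 + 7 / 8)) := by
  have hpos : ∀ n : ℕ, 1 + a + n ≠ 0 := fun n h => ha ⟨-(n + 1 : ℤ), by omega, by
    push_cast; linear_combination h⟩
  have hneg : ∀ n : ℕ, 1 - a + n ≠ 0 := fun n h => ha ⟨(n + 1 : ℤ), by omega, by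
    push_cast; linear_combination -h⟩
  have hterm := funext (term_eq a)
  have hsum : Summable (tt (al 0) (1 / 2 + a)) := by
    apply tt_summable _ (al_ge 0)
    · intro n h; apply hneg n; simp only [al] at h; push_cast at h; linear_combination h
    · intro n h; apply hpos n; simp only [al] at h; push_cast at h; linear_combination h
  refine ⟨by rw [hterm]; exact hsum, ?_⟩
  rw [cHyp, hterm]
  have L1 := (FN_tendsto a (fun n h => hpos (2 * n) (by push_cast; linear_combination 2 * h))
    (fun n h => hpos (2 * n + 1) (by push_cast; linear_combination 2 * h))
    (fun n h => hneg (2 * n) (by push_cast; linear_combination 2 * h))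
    (fun n h => hneg (2 * n + 1) (by push_cast; linear_combination 2 * h))).mul
    (S_tendsto a hpos hneg)
  have L2 := L1.congr fun N => (S_eq a hpos hneg N).symm
  have L3 := tendsto_nhds_unique tendsto_const_nhds L2
  change ∑' k, tt (al 0) (1 / 2 + a) k = _
  rw [L3, mul_one]
  have k1 := const_gamma
  have k2 := a_gamma a
  have gp : ∀ y : ℂ, 0 < y.re → Gamma y ≠ 0 := fun y hy => Gamma_ne_zero_of_re_pos hy
  have g1 := gp (1 / 4) (by norm_num)
  have g2 := gp (3 / 4) (by norm_num)
  have g3 := gp (5 / 4) (by norm_num)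
  have hk : Gamma (1 / 4) * Gamma (3 / 4) * Gamma (3 / 4) * Gamma (5 / 4) ≠ 0 :=
    mul_ne_zero (mul_ne_zero (mul_ne_zero g1 g2) g2) g3
  have hs2 : ((Real.sqrt 2 : ℝ) : ℂ) ≠ 0 := by
    simp
  rw [← k2]
  have k3 : (Gamma (5 / 8) * Gamma (3 / 8) * Gamma (9 / 8) * Gamma (7 / 8))
      / (Gamma (1 / 4) * Gamma (3 / 4) * Gamma (3 / 4) * Gamma (5 / 4))
      = ((Real.sqrt 2 : ℝ) : ℂ)⁻¹ := by
    rw [div_eq_iff hk, ← k1]; field_simp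
  exact final_alg _ _ _ _ _ _ _ _ _ _ _ _ _ _ _ _ k3
end

section
/- Let p be an odd prime and q = p^r a prime power with q ≡ 1 (mod 4). Let χ_4 be a multiplicative character of F_q^* of order 4 and φ the quadratic character. Let x, y be integers with q = x^2 + y^2, x ≡ 1 (mod 4), and such that p does not divide x whenever p ≡ 1 (mod 4). Then _4F_4(χ_4, χ_4^3, χ_4, χ_4^3; ε, φ, ε, φ | 1)_q = 1 + 2x if q ≡ 1 (mod 8), and _4F_4(χ_4, χ_4^3, χ_4, χ_4^3; ε, φ, ε, φ | 1)_q = 1 − 2x if q ≡ 5 (mod 8). -/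
/-- The finite field hypergeometric function `ₘFₘ` of McCarthy, with upper parameters `A`,
lower parameters `B` (indexed by a finite type `ι`), and argument `lam`. -/
noncomputable def ffHyp {F : Type} [Field F] [Fintype F] (θ : AddChar F ℂ)
    {ι : Type} [Fintype ι] (A B : ι → MulChar F ℂ) (lam : F) : ℂ :=
  letI : Fintype (MulChar F ℂ) := Fintype.ofFinite _
  (-1 : ℂ) / ((Fintype.card F : ℂ) - 1) *
    ∑ χ : MulChar F ℂ,
      (∏ i, (gaussSum (A i * χ) θ / gaussSum (A i) θ) *
        (gaussSum ((B i * χ)⁻¹) θ / gaussSum ((B i)⁻¹) θ)) *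
      χ (-1) ^ (Fintype.card ι) * χ lam


lemma nt_three (p : ℕ) (hp : p.Prime) (h3 : p % 4 = 3) : ∀ (r : ℕ) (a b : ℤ),
    a ^ 2 + b ^ 2 = (p : ℤ) ^ r → a * b = 0 := by
  have : Fact p.Prime := ⟨hp⟩
  intro r
  induction r using Nat.strong_induction_on with
  | _ r ih =>
    intro a b h
    rcases Nat.eq_zero_or_pos r with rfl | hr
    · simp at h
      by_contra hab
      have ha : a ≠ 0 := left_ne_zero_of_mul hab
      have hb : b ≠ 0 := right_ne_zero_of_mul hab
      have := sq_pos_of_ne_zero ha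
      have := sq_pos_of_ne_zero hb
      omega
    · have hz : ((a : ZMod p)) ^ 2 + (b : ZMod p) ^ 2 = 0 := by
        have := congrArg (Int.cast : ℤ → ZMod p) h
        push_cast at this
        rw [this, ZMod.natCast_self, zero_pow hr.ne']
      have hb : (b : ZMod p) = 0 := by
        by_contra hb
        exact ZMod.mod_four_ne_three_of_sq_eq_neg_sq' hb (eq_neg_of_add_eq_zero_left hz) h3
      have ha : (a : ZMod p) = 0 := by
        rw [hb] at hz; simpa using hz
      rw [ZMod.intCast_zmod_eq_zero_iff_dvd] at ha hb
      obtain ⟨a', rfl⟩ := ha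
      obtain ⟨b', rfl⟩ := hb
      have hp0 : (p : ℤ) ≠ 0 := by exact_mod_cast hp.ne_zero
      obtain ⟨r, rfl⟩ : ∃ k, r = k + 1 := ⟨r - 1, by omega⟩
      have h1 : (p : ℤ) * (a' ^ 2 + b' ^ 2) = (p : ℤ) ^ r := by
        apply mul_left_cancel₀ hp0
        rw [pow_succ] at h
        linear_combination h
      rcases Nat.eq_zero_or_pos r with rfl | hr
      · exfalso
        have : (p : ℤ) ∣ 1 := ⟨_, by rw [h1]; simp⟩
        have := Int.natCast_dvd_natCast.mp (by exact_mod_cast this : (p : ℤ) ∣ ((1 : ℕ) : ℤ))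
        exact hp.one_lt.ne' (Nat.dvd_one.mp this)
      · obtain ⟨r, rfl⟩ : ∃ k, r = k + 1 := ⟨r - 1, by omega⟩
        have h2 : a' ^ 2 + b' ^ 2 = (p : ℤ) ^ r := by
          apply mul_left_cancel₀ hp0
          rw [h1, pow_succ]; ring
        have := ih r (by omega) a' b' h2
        linear_combination (p : ℤ) ^ 2 * this

lemma nt_one_aux (q a b x y : ℤ) (hq : q ≠ 0) (hab : a ^ 2 + b ^ 2 = q) (hxy : x ^ 2 + y ^ 2 = q)
    (ha : a % 2 = 1) (hx : x % 2 = 1) (hqo : q % 2 = 1) (h : q ∣ a * x - b * y) :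
    a ^ 2 = x ^ 2 := by
  obtain ⟨k, hk⟩ := h
  have h1 : (a * x - b * y) ^ 2 + (a * y + b * x) ^ 2 = q ^ 2 := by
    rw [show q ^ 2 = (a ^ 2 + b ^ 2) * (x ^ 2 + y ^ 2) by rw [hab, hxy]; ring]; ring
  rw [hk] at h1
  have hq2 : 0 < q ^ 2 := by positivity
  have hk1 : k ^ 2 ≤ 1 := by
    by_contra hc
    push Not at hc
    nlinarith [sq_nonneg (a * y + b * x)]
  have hk3 : k ^ 2 = 0 ∨ k ^ 2 = 1 := by
    have := sq_nonneg k
    omega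
  rcases hk3 with h0 | h0
  · have hk0 : k = 0 := by simpa using h0
    rw [hk0] at hk
    have h2 : (a * x) ^ 2 = (b * y) ^ 2 := by rw [show a * x = b * y by linarith]
    have h3 : q * (a ^ 2 + x ^ 2 - q) = 0 := by
      have e1 : b ^ 2 = q - a ^ 2 := by linarith
      have e2 : y ^ 2 = q - x ^ 2 := by linarith
      rw [mul_pow, mul_pow, e1, e2] at h2
      linear_combination h2
    have h4 : a ^ 2 + x ^ 2 = q := by
      rcases mul_eq_zero.mp h3 with h | h
      · exact absurd h hq
      · linarith
    exfalso
    have : (a ^ 2 + x ^ 2) % 2 = 0 := by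
      rw [pow_two, pow_two, Int.add_emod, Int.mul_emod, Int.mul_emod x, ha, hx]; rfl
    omega
  · have h2 : (a * y + b * x) ^ 2 = 0 := by
      rw [mul_pow, h0] at h1; linarith
    have h3 : a * y + b * x = 0 := by simpa using h2
    have h4 : (a * y) ^ 2 = (b * x) ^ 2 := by rw [show a * y = - (b * x) by linarith]; ring
    have e1 : b ^ 2 = q - a ^ 2 := by linarith
    have e2 : y ^ 2 = q - x ^ 2 := by linarith
    rw [mul_pow, mul_pow, e1, e2] at h4
    apply mul_left_cancel₀ hq
    linear_combination h4

lemma nt_unique (p r : ℕ) (hp : p.Prime) (hp2 : Odd p) (a b x y : ℤ)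
    (hab : a ^ 2 + b ^ 2 = (p : ℤ) ^ r) (hxy : x ^ 2 + y ^ 2 = (p : ℤ) ^ r)
    (ha : a % 2 = 1) (hx : x % 2 = 1)
    (hpa : p % 4 = 1 → ¬ (p : ℤ) ∣ a) (hpx : p % 4 = 1 → ¬ (p : ℤ) ∣ x) : a ^ 2 = x ^ 2 := by
  have hodd := hp2
  rw [Nat.odd_iff] at hp2
  rcases (by omega : p % 4 = 1 ∨ p % 4 = 3) with h1 | h3
  · have hpZ : Prime (p : ℤ) := Nat.prime_iff_prime_int.mp hp
    have hq0 : (p : ℤ) ^ r ≠ 0 := pow_ne_zero _ hpZ.ne_zero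
    have hqo : ((p : ℤ) ^ r) % 2 = 1 := by
      have : Odd ((p : ℤ) ^ r) := (by exact_mod_cast hodd : Odd (p : ℤ)).pow
      exact Int.odd_iff.mp this
    have hprod : (p : ℤ) ^ r ∣ (a * x - b * y) * (a * x + b * y) := by
      refine ⟨a ^ 2 + x ^ 2 - (p : ℤ) ^ r, ?_⟩
      have e1 : b ^ 2 = (p : ℤ) ^ r - a ^ 2 := by linarith
      have e2 : y ^ 2 = (p : ℤ) ^ r - x ^ 2 := by linarith
      have : (a * x - b * y) * (a * x + b * y) = a ^ 2 * x ^ 2 - b ^ 2 * y ^ 2 := by ring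
      rw [this, e1, e2]; ring
    have hnot : ¬ ((p : ℤ) ∣ (a * x - b * y) ∧ (p : ℤ) ∣ (a * x + b * y)) := by
      rintro ⟨h, h'⟩
      have : (p : ℤ) ∣ 2 * (a * x) := by
        have := dvd_add h h'
        rwa [show a * x - b * y + (a * x + b * y) = 2 * (a * x) by ring] at this
      rcases hpZ.dvd_or_dvd this with h | h
      · have := Int.natCast_dvd_natCast.mp (by exact_mod_cast h : (p : ℤ) ∣ ((2 : ℕ) : ℤ))
        have := Nat.le_of_dvd (by norm_num) this
        have := hp.two_le
        omega
      · rcases hpZ.dvd_or_dvd h with h | h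
        · exact hpa h1 h
        · exact hpx h1 h
    have hor : (p : ℤ) ^ r ∣ (a * x - b * y) ∨ (p : ℤ) ^ r ∣ (a * x + b * y) := by
      by_cases h : (p : ℤ) ∣ a * x - b * y
      · left
        exact hpZ.pow_dvd_of_dvd_mul_right r (fun h' => hnot ⟨h, h'⟩) hprod
      · right
        exact hpZ.pow_dvd_of_dvd_mul_left r h hprod
    rcases hor with h | h
    · exact nt_one_aux _ a b x y hq0 hab hxy ha hx hqo h
    · exact nt_one_aux _ a b x (-y) hq0 hab (by rw [← hxy]; ring) ha hx hqo (by convert h using 1; ring)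
  · have ea := nt_three p hp h3 r a b hab
    have ex := nt_three p hp h3 r x y hxy
    have hb : b = 0 := by
      rcases mul_eq_zero.mp ea with h | h
      · subst h; simp at ha
      · exact h
    have hy : y = 0 := by
      rcases mul_eq_zero.mp ex with h | h
      · subst h; simp at hx
      · exact h
    subst hb hy
    linarith

lemma choose_ndvd (p : ℕ) (hp : p.Prime) (h1 : p % 4 = 1) (r : ℕ) :
    ¬ p ∣ Nat.choose ((p ^ r - 1) / 2) ((p ^ r - 1) / 4) := by
  have : Fact p.Prime := ⟨hp⟩
  induction r with
  | zero => simpa using hp.one_lt.ne'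
  | succ r ih =>
    have hp1 := hp.one_lt
    have hr4 : p ^ r % 4 = 1 := by rw [Nat.pow_mod, h1]; simp
    obtain ⟨m, hm⟩ : ∃ m, p = 4 * m + 1 := ⟨p / 4, by omega⟩
    obtain ⟨n, hn⟩ : ∃ n, p ^ r = 4 * n + 1 := ⟨p ^ r / 4, by omega⟩
    have e : p ^ (r + 1) = 4 * (n * p + m) + 1 := by rw [pow_succ, hn]; rw [hm]; ring
    have e1 : (p ^ (r + 1) - 1) / 2 = 2 * m + p * (2 * n) := by
      rw [e, show n * p = p * n by ring, show p * (2 * n) = 2 * (p * n) by ring]; omega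
    have e2 : (p ^ (r + 1) - 1) / 4 = m + p * n := by
      rw [e, show n * p = p * n by ring]; omega
    have e3 : (p ^ r - 1) / 2 = 2 * n := by omega
    have e4 : (p ^ r - 1) / 4 = n := by omega
    rw [e1, e2]
    rw [e3, e4] at ih
    have := Choose.choose_modEq_choose_mod_mul_choose_div_nat (n := 2 * m + p * (2 * n))
      (k := m + p * n) (p := p)
    rw [Nat.add_mul_mod_self_left, Nat.add_mul_mod_self_left, Nat.add_mul_div_left _ _ hp.pos,
      Nat.add_mul_div_left _ _ hp.pos, Nat.mod_eq_of_lt (by omega), Nat.mod_eq_of_lt (by omega),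
      Nat.div_eq_of_lt (by omega), Nat.div_eq_of_lt (by omega), zero_add, zero_add] at this
    rw [this.dvd_iff dvd_rfl, hp.dvd_mul]
    rintro (h | h)
    · have : Nat.choose (2 * m) m ∣ (2 * m).factorial := by
        rw [← Nat.choose_mul_factorial_mul_factorial (show m ≤ 2 * m by omega)]
        exact ⟨_, by rw [mul_assoc]⟩
      have := (hp.dvd_factorial).mp (h.trans this)
      omega
    · exact ih h

open Finset in
lemma S_mod8 {F : Type} [Field F] [Fintype F] [DecidableEq F] (hq4 : Fintype.card F % 4 = 1)
    (h2 : (2 : F) ≠ 0) :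
    (8 : ℤ) ∣ (Fintype.card F : ℤ) - 3 - ∑ s : F, quadraticChar F (s ^ 3 - s) := by
  obtain ⟨i, hi⟩ : IsSquare (-1 : F) := FiniteField.isSquare_neg_one_iff.mpr (by omega)
  have hi0 : i ≠ 0 := by rintro rfl; simp at hi
  have hneg : quadraticChar F (-1) = 1 := by
    rw [hi, ← pow_two]; exact quadraticChar_sq_one' hi0
  set A : Finset F := univ.filter (fun s => quadraticChar F (s ^ 3 - s) = -1) with hA
  have key0 : ∀ s ∈ A, s ≠ 0 ∧ s ^ 2 ≠ 1 ∧ s ^ 2 ≠ -1 := by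
    intro s hs
    rw [hA, mem_filter] at hs
    refine ⟨?_, ?_, ?_⟩
    · rintro rfl; simp at hs
    · intro h
      have : s ^ 3 - s = 0 := by linear_combination s * h
      rw [this] at hs; simp at hs
    · intro h
      have : s ^ 3 - s = (1 - s) ^ 2 := by linear_combination (s - 1) * h
      have hne : (1 - s) ≠ 0 := by
        intro h'
        rw [this, h'] at hs; simp at hs
      rw [this, quadraticChar_sq_one' hne] at hs
      exact absurd hs.2 (by norm_num)
  have hnegmem : ∀ s ∈ A, -s ∈ A := by
    intro s hs
    rw [hA, mem_filter] at hs ⊢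
    refine ⟨mem_univ _, ?_⟩
    rw [show (-s) ^ 3 - (-s) = (-1) * (s ^ 3 - s) by ring, map_mul, hneg, hs.2]; rfl
  have hinvmem : ∀ s ∈ A, s⁻¹ ∈ A := by
    intro s hs
    obtain ⟨h0, -, -⟩ := key0 s hs
    rw [hA, mem_filter] at hs ⊢
    refine ⟨mem_univ _, ?_⟩
    have : s⁻¹ ^ 3 - s⁻¹ = (-1) * ((s⁻¹ ^ 2) ^ 2 * (s ^ 3 - s)) := by
      field_simp
      ring
    rw [this, map_mul, map_mul, hneg, quadraticChar_sq_one' (by simpa using h0), hs.2]; rfl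
  have hcardA : 4 ∣ A.card := by
    rw [card_eq_sum_card_image (fun s : F => s ^ 2 + (s⁻¹) ^ 2) A]
    apply dvd_sum
    intro c hc
    obtain ⟨s, hs, rfl⟩ := mem_image.mp hc
    obtain ⟨h0, h1, h3⟩ := key0 s hs
    have : (A.filter (fun t => t ^ 2 + (t⁻¹) ^ 2 = s ^ 2 + (s⁻¹) ^ 2)) = {s, -s, s⁻¹, -s⁻¹} := by
      ext t
      simp only [mem_filter, mem_insert, mem_singleton]
      constructor
      · rintro ⟨ht, h⟩
        obtain ⟨t0, -, -⟩ := key0 t ht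
        have : (t - s) * (t + s) * ((t * s - 1) * (t * s + 1)) = 0 := by
          field_simp at h
          linear_combination h
        rcases mul_eq_zero.mp this with h | h
        · rcases mul_eq_zero.mp h with h | h
          · left; exact sub_eq_zero.mp h
          · right; left; exact eq_neg_of_add_eq_zero_left h
        · rcases mul_eq_zero.mp h with h | h
          · right; right; left; exact eq_inv_of_mul_eq_one_left (sub_eq_zero.mp h)
          · right; right; right
            rw [← inv_neg]
            exact eq_inv_of_mul_eq_one_left (by linear_combination -h)
      · rintro (rfl | rfl | rfl | rfl)
        · exact ⟨hs, rfl⟩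
        · exact ⟨hnegmem _ hs, by rw [inv_neg]; ring⟩
        · exact ⟨hinvmem _ hs, by rw [inv_inv]; ring⟩
        · exact ⟨hnegmem _ (hinvmem _ hs), by rw [inv_neg, inv_inv]; ring⟩
    rw [this]
    have n1 : s ≠ -s := by
      intro h
      have : 2 * s = 0 := by linear_combination h
      exact (mul_ne_zero h2 h0) this
    have n2 : s ≠ s⁻¹ := by
      intro h
      apply h1
      rw [pow_two]; nth_rewrite 2 [h]; exact mul_inv_cancel₀ h0
    have n3 : s ≠ -s⁻¹ := by
      intro h
      apply h3
      rw [pow_two]; nth_rewrite 2 [h]; rw [mul_neg, mul_inv_cancel₀ h0]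
    have n4 : -s ≠ s⁻¹ := fun h => n3 (by rw [← h, neg_neg])
    have n5 : -s ≠ -s⁻¹ := fun h => n2 (neg_injective h)
    have n6 : s⁻¹ ≠ -s⁻¹ := by
      intro h
      have : 2 * s⁻¹ = 0 := by linear_combination h
      exact (mul_ne_zero h2 (inv_ne_zero h0)) this
    rw [card_insert_of_notMem, card_insert_of_notMem, card_insert_of_notMem, card_singleton]
    · simpa using n6
    · simp only [mem_insert, mem_singleton, not_or]; exact ⟨n4, n5⟩
    · simp only [mem_insert, mem_singleton, not_or]; exact ⟨n1, n2, n3⟩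
  have h11 : (1 : F) ≠ -1 := by
    intro h; apply h2; linear_combination h
  have hsum : ∑ s : F, (1 - quadraticChar F (s ^ 3 - s)) = 2 * (A.card : ℤ) + 3 := by
    have hpt : ∀ s : F, (1 - quadraticChar F (s ^ 3 - s)) =
        2 * (if s ∈ A then 1 else 0) + (if s ∈ ({0, 1, -1} : Finset F) then 1 else 0) := by
      intro s
      by_cases h0 : s ^ 3 - s = 0
      · have hm : s ∈ ({0, 1, -1} : Finset F) := by
          have : s * ((s - 1) * (s + 1)) = 0 := by linear_combination h0
          simp only [mem_insert, mem_singleton]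
          rcases mul_eq_zero.mp this with h | h
          · exact Or.inl h
          · rcases mul_eq_zero.mp h with h | h
            · right; left; exact sub_eq_zero.mp h
            · right; right; exact eq_neg_of_add_eq_zero_left h
        have hn : s ∉ A := by
          rw [hA, mem_filter, h0]; simp
        rw [if_pos hm, if_neg hn, h0]; simp
      · have hm : s ∉ ({0, 1, -1} : Finset F) := by
          simp only [mem_insert, mem_singleton, not_or]
          refine ⟨?_, ?_, ?_⟩ <;> rintro rfl <;> apply h0 <;> ring
        rw [if_neg hm]
        rcases quadraticChar_dichotomy h0 with h | h
        · have hn : s ∉ A := by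
            rw [hA, mem_filter, h]; simp
          rw [if_neg hn, h]; simp
        · have hn : s ∈ A := by
            rw [hA, mem_filter, h]; simp
          rw [if_pos hn, h]; simp
    have hc3 : ({0, 1, -1} : Finset F).card = 3 := by
      rw [card_insert_of_notMem, card_insert_of_notMem, card_singleton]
      · simpa using h11
      · simp
    rw [sum_congr rfl (fun s _ => hpt s), sum_add_distrib, ← mul_sum, sum_boole, sum_boole,
      filter_univ_mem, filter_univ_mem, hc3]
    rfl
  rw [sum_sub_distrib] at hsum
  simp only [sum_const, card_univ, nsmul_eq_mul, mul_one] at hsum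
  obtain ⟨k, hk⟩ := hcardA
  rw [hk] at hsum
  refine ⟨k, ?_⟩
  push_cast at hsum
  linarith

open Finset in
lemma sum_pow_eq {F : Type} [Field F] [Fintype F] (j : ℕ) (hj : 0 < j) :
    ∑ s : F, s ^ j = if Fintype.card F - 1 ∣ j then -1 else 0 := by
  classical
  rw [← FiniteField.sum_pow_units F j]
  symm
  calc ∑ x : Fˣ, ((x : F) ^ j) = ∑ x : {a : F // a ≠ 0}, (x : F) ^ j :=
        Fintype.sum_equiv unitsEquivNeZero _ _ (fun x => rfl)
    _ = ∑ x ∈ univ.filter (fun a : F => a ≠ 0), x ^ j := by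
        rw [← Finset.sum_subtype_eq_sum_filter]; simp
    _ = _ := by
        rw [sum_filter_of_ne]
        intro x _ hx h0
        rw [h0, zero_pow hj.ne'] at hx
        exact hx rfl

open Finset in
lemma S_cast {F : Type} [Field F] [Fintype F] [DecidableEq F] (hq4 : Fintype.card F % 4 = 1)
    (h2 : ringChar F ≠ 2) :
    ((∑ s : F, quadraticChar F (s ^ 3 - s) : ℤ) : F) =
     - ((-1) ^ ((Fintype.card F - 1) / 4) *
      (Nat.choose ((Fintype.card F - 1) / 2) ((Fintype.card F - 1) / 4) : F)) := by
  obtain ⟨m, hm⟩ : ∃ m, Fintype.card F = 4 * m + 1 := ⟨Fintype.card F / 4, by omega⟩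
  have hm0 : 0 < m := by
    have := Fintype.one_lt_card (α := F); omega
  have e1 : (Fintype.card F - 1) / 2 = 2 * m := by omega
  have e2 : (Fintype.card F - 1) / 4 = m := by omega
  have e3 : Fintype.card F / 2 = 2 * m := by omega
  rw [e1, e2]
  push_cast
  simp_rw [quadraticChar_eq_pow_of_char_ne_two' h2, e3]
  have : ∀ s : F, (s ^ 3 - s) ^ (2 * m) = ∑ k ∈ range (2 * m + 1),
      ((-1) ^ (2 * m - k) * (Nat.choose (2 * m) k : F)) * s ^ (2 * m + 2 * k) := by
    intro s
    rw [show s ^ 3 - s = s * (s ^ 2 + (-1)) by ring, mul_pow, add_pow, mul_sum]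
    refine sum_congr rfl fun k _ => ?_
    rw [pow_add, pow_mul s 2 k]; ring
  simp_rw [this]
  rw [sum_comm]
  simp_rw [← mul_sum]
  rw [sum_eq_single m]
  · rw [sum_pow_eq _ (by omega), if_pos ⟨1, by omega⟩, show 2 * m - m = m by omega]; ring
  · intro k hk hkm
    rw [mem_range] at hk
    rw [sum_pow_eq _ (by omega), if_neg, mul_zero]
    rintro ⟨c, hc⟩
    rw [hm, Nat.add_sub_cancel] at hc
    have : c = 1 := by
      have h1 : 0 < c := by
        rcases Nat.eq_zero_or_pos c with h | h
        · subst h; omega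
        · exact h
      have h2 : c < 2 := by
        by_contra h
        have : 4 * m * 2 ≤ 4 * m * c := Nat.mul_le_mul_left _ (by omega)
        omega
      omega
    subst this
    omega
  · intro h; exact absurd (mem_range.mpr (by omega)) h

lemma quad_eq {F : Type} [Field F] [Fintype F] [DecidableEq F] (h2 : ringChar F ≠ 2)
    (φ : MulChar F ℂ) (hφ : orderOf φ = 2) :
    φ = (quadraticChar F).ringHomComp (Int.castRingHom ℂ) := by
  obtain ⟨g, hg⟩ := IsCyclic.exists_generator (α := Fˣ)
  have hgen : ∀ ψ : MulChar F ℂ, ψ ^ 2 = 1 → ψ ≠ 1 → ψ g = -1 := by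
    intro ψ h1 hne
    have h3 : (ψ g) ^ 2 = 1 := by
      rw [← MulChar.pow_apply_coe, h1, MulChar.one_apply_coe]
    rcases sq_eq_one_iff.mp h3 with h | h
    · exact absurd ((MulChar.eq_iff hg ψ 1).mpr (by rw [h, MulChar.one_apply_coe])) hne
    · exact h
  rw [MulChar.eq_iff hg, hgen φ (by rw [← hφ]; exact pow_orderOf_eq_one φ), hgen]
  · exact ((quadraticChar_isQuadratic F).comp _).sq_eq_one
  · rw [MulChar.ringHomComp_ne_one_iff (RingHom.injective_int _)]
    exact quadraticChar_ne_one h2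
  · rintro rfl; simp at hφ

open Finset in
lemma sum_sq {F : Type} [Field F] [Fintype F] (h2 : ringChar F ≠ 2)
    (φ : MulChar F ℂ) (hφ : orderOf φ = 2) (f : F → ℂ) :
    ∑ x : F, f (x ^ 2) = ∑ u : F, f u * (1 + φ u) := by
  classical
  rw [← sum_fiberwise_of_maps_to (s := univ) (t := univ) (g := fun x : F => x ^ 2)
    (fun _ _ => mem_univ _)]
  refine sum_congr rfl fun u _ => ?_
  have h := quadraticChar_card_sqrts h2 u
  have h' : ((univ.filter (fun x : F => x ^ 2 = u)).card : ℂ) = φ u + 1 := by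
    rw [quad_eq h2 φ hφ]
    have : {x : F | x ^ 2 = u}.toFinset = univ.filter (fun x : F => x ^ 2 = u) := by
      ext; simp
    rw [this] at h
    have := congrArg (Int.cast : ℤ → ℂ) h
    push_cast at this
    rw [this]; simp
  rw [sum_congr rfl (g := fun _ => f u), sum_const, nsmul_eq_mul, h']
  · ring
  · intro x hx; rw [(mem_filter.mp hx).2]

lemma jacobi_dup {F : Type} [Field F] [Fintype F] (h2 : ringChar F ≠ 2)
    (φ : MulChar F ℂ) (hφ : orderOf φ = 2) (B : MulChar F ℂ) (hB : B ≠ 1) :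
    jacobiSum B B = B 4⁻¹ * jacobiSum B φ := by
  have h20 : (2 : F) ≠ 0 := Ring.two_ne_zero h2
  have h40 : (4 : F) ≠ 0 := by
    rw [show (4 : F) = 2 * 2 by norm_num]; exact mul_ne_zero h20 h20
  let e : F ≃ F := (Equiv.addLeft (1 : F)).trans (Equiv.mulLeft₀ (2 : F)⁻¹ (inv_ne_zero h20))
  have he : ∀ t, e t = 2⁻¹ * (1 + t) := fun t => rfl
  have hz : ∑ u : F, B (1 - u) = 0 := by
    rw [← MulChar.sum_eq_zero_of_ne_one hB]
    exact Equiv.sum_comp (Equiv.subLeft (1 : F)) (fun x => B x)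
  calc jacobiSum B B = ∑ t : F, B (e t) * B (1 - e t) := by
        rw [jacobiSum]; exact (Equiv.sum_comp e (fun x => B x * B (1 - x))).symm
    _ = ∑ t : F, (fun u => B 4⁻¹ * B (1 - u)) (t ^ 2) := by
        refine Finset.sum_congr rfl fun t _ => ?_
        simp only
        rw [← map_mul, ← map_mul, he]
        congr 1
        rw [show (4 : F) = 2 * 2 by norm_num]
        field_simp
        ring
    _ = ∑ u : F, (B 4⁻¹ * B (1 - u) + B 4⁻¹ * (φ u * B (1 - u))) := by
        rw [sum_sq h2 φ hφ (fun u => B 4⁻¹ * B (1 - u))]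
        refine Finset.sum_congr rfl fun t _ => ?_
        ring
    _ = _ := by
        rw [Finset.sum_add_distrib, ← Finset.mul_sum, ← Finset.mul_sum, hz, jacobiSum_comm,
          jacobiSum]
        ring

lemma phi_ne_one {F : Type} [Field F] [Fintype F] (φ : MulChar F ℂ) (hφ : orderOf φ = 2) :
    φ ≠ 1 := by rintro rfl; simp at hφ

lemma phi_sq {F : Type} [Field F] [Fintype F] (φ : MulChar F ℂ) (hφ : orderOf φ = 2) :
    φ ^ 2 = 1 := by rw [← hφ]; exact pow_orderOf_eq_one φ

lemma phi_apply_sq {F : Type} [Field F] [Fintype F] (φ : MulChar F ℂ) (hφ : orderOf φ = 2)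
    (a : F) (ha : a ≠ 0) : φ (a ^ 2) = 1 := by
  rw [map_pow, ← MulChar.pow_apply' φ (by norm_num), phi_sq φ hφ,
    MulChar.one_apply (isUnit_iff_ne_zero.mpr ha)]

lemma hd_dup {F : Type} [Field F] [Fintype F] (h2 : ringChar F ≠ 2)
    (φ : MulChar F ℂ) (hφ : orderOf φ = 2) (θ : AddChar F ℂ) (hθ : θ ≠ 1) (B : MulChar F ℂ) :
    gaussSum B θ * gaussSum (B * φ) θ = B 4⁻¹ * gaussSum (B ^ 2) θ * gaussSum φ θ := by
  have h20 : (2 : F) ≠ 0 := Ring.two_ne_zero h2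
  have h40 : (4 : F) ≠ 0 := by
    rw [show (4 : F) = 2 * 2 by norm_num]; exact mul_ne_zero h20 h20
  have hprim : θ.IsPrimitive := AddChar.IsPrimitive.of_ne_one hθ
  have hqC : (Fintype.card F : ℂ) ≠ 0 := by exact_mod_cast Fintype.card_ne_zero
  by_cases hB : B = 1
  · subst hB
    rw [one_mul, one_pow, MulChar.one_apply (isUnit_iff_ne_zero.mpr (inv_ne_zero h40)), one_mul]
  · by_cases hB2 : B ^ 2 = 1
    · have hBord : orderOf B = 2 := orderOf_eq_prime hB2 hB
      have hBφ : B = φ := by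
        classical
        rw [quad_eq h2 B hBord, quad_eq h2 φ hφ]
      subst hBφ
      rw [← pow_two, hB2, show (4 : F)⁻¹ = (2⁻¹) ^ 2 by
        rw [show (4 : F) = 2 ^ 2 by norm_num, inv_pow], phi_apply_sq B hφ _ (inv_ne_zero h20)]
      ring
    · have hBφ : B * φ ≠ 1 := by
        intro h
        apply hB2
        have h3 : B = φ⁻¹ := eq_inv_of_mul_eq_one_left h
        rw [h3, inv_pow, phi_sq φ hφ, inv_one]
      have e1 := jacobiSum_mul_nontrivial (χ := B) (φ := B) (by rwa [← pow_two]) θ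
      have e2 := jacobiSum_mul_nontrivial (χ := B) (φ := φ) hBφ θ
      have e3 := jacobi_dup h2 φ hφ B hB
      have hg : gaussSum B θ ≠ 0 := gaussSum_ne_zero_of_nontrivial hqC hB hprim
      rw [← pow_two, e3] at e1
      apply mul_left_cancel₀ hg
      linear_combination -gaussSum (B * φ) θ * e1 + B 4⁻¹ * gaussSum (B ^ 2) θ * e2

lemma prod_sq {F : Type} [Field F] [Fintype F] (h2 : ringChar F ≠ 2)
    (φ : MulChar F ℂ) (hφ : orderOf φ = 2) (χ₄ : MulChar F ℂ) (h4 : χ₄ ^ 2 = φ)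
    (θ : AddChar F ℂ) (hθ : θ ≠ 1) (χ : MulChar F ℂ) :
    (gaussSum (χ₄ * χ) θ * gaussSum (χ₄ ^ 3 * χ) θ * (gaussSum ((1 * χ)⁻¹) θ *
      gaussSum ((φ * χ)⁻¹) θ)) ^ 2 =
    gaussSum φ θ ^ 6 * jacobiSum (φ * χ ^ 2) (χ⁻¹ ^ 2) ^ 2 := by
  have h20 : (2 : F) ≠ 0 := Ring.two_ne_zero h2
  have hφi : φ⁻¹ = φ := by
    have := phi_sq φ hφ
    rw [pow_two] at this
    exact inv_eq_of_mul_eq_one_left this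
  have a1 := hd_dup h2 φ hφ θ hθ (χ₄ * χ)
  have a2 := hd_dup h2 φ hφ θ hθ χ⁻¹
  have a3 := jacobiSum_mul_nontrivial (χ := φ * χ ^ 2) (φ := χ⁻¹ ^ 2)
    (by rw [inv_pow, mul_inv_cancel_right]; exact phi_ne_one φ hφ) θ
  rw [inv_pow, mul_inv_cancel_right, ← inv_pow] at a3
  have c1 : χ₄ ^ 3 * χ = χ₄ * χ * φ := by rw [← h4]; rw [pow_succ' χ₄ 2]; exact mul_right_comm _ _ _
  have c2 : (φ * χ)⁻¹ = χ⁻¹ * φ := by rw [mul_inv, hφi, mul_comm]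
  have c3 : (χ₄ * χ) ^ 2 = φ * χ ^ 2 := by rw [mul_pow, h4]
  have h44 : (4 : F)⁻¹ = (2⁻¹) ^ 2 := by rw [show (4 : F) = 2 ^ 2 by norm_num, inv_pow]
  have c4 : (χ₄ * χ) 4⁻¹ * χ⁻¹ 4⁻¹ = χ₄ 4⁻¹ := by
    rw [← MulChar.mul_apply, mul_inv_cancel_right]
  have c5 : (χ₄ 4⁻¹) ^ 2 = 1 := by
    rw [← MulChar.pow_apply' _ (by norm_num), h4, h44, phi_apply_sq φ hφ _ (inv_ne_zero h20)]
  rw [c1, c2, one_mul, a1, a2, c3]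
  have : (χ₄ * χ) 4⁻¹ * gaussSum (φ * χ ^ 2) θ * gaussSum φ θ *
      (χ⁻¹ 4⁻¹ * gaussSum (χ⁻¹ ^ 2) θ * gaussSum φ θ) =
      χ₄ 4⁻¹ * (gaussSum φ θ ^ 3 * jacobiSum (φ * χ ^ 2) (χ⁻¹ ^ 2)) := by
    rw [← c4]
    linear_combination -(χ₄ * χ) 4⁻¹ * χ⁻¹ 4⁻¹ * gaussSum φ θ ^ 2 * a3
  rw [this, mul_pow, c5]
  ring

lemma sum_chars {F : Type} [Field F] [Fintype F] [DecidableEq F] [Fintype (MulChar F ℂ)] (a : F) :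
    ∑ χ : MulChar F ℂ, χ a = if a = 1 then (Fintype.card F : ℂ) - 1 else 0 := by
  split_ifs with ha
  · subst ha
    simp only [map_one, Finset.sum_const, nsmul_eq_mul, mul_one, Finset.card_univ]
    rw [← Nat.card_eq_fintype_card, MulChar.card_eq_card_units_of_hasEnoughRootsOfUnity F ℂ,
      Nat.card_eq_fintype_card, Fintype.card_units, Nat.cast_sub Fintype.card_pos]
    simp
  · obtain ⟨χ, hχ⟩ := MulChar.exists_apply_ne_one_of_hasEnoughRootsOfUnity F ℂ ha
    refine eq_zero_of_mul_eq_self_left hχ ?_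
    simp only [Finset.mul_sum, ← MulChar.mul_apply]
    exact Fintype.sum_bijective _ (Group.mulLeft_bijective χ) _ _ fun χ' ↦ rfl

lemma pt_eq {F : Type} [Field F] [Fintype F] [DecidableEq F] (h2 : ringChar F ≠ 2)
    (φ : MulChar F ℂ) (u v : F) (hu0 : u ≠ 0) (hu1 : u ≠ 1) :
    φ v * (if (u * (1 - u)⁻¹ * (v * (1 - v)⁻¹)) ^ 2 = 1 then (1 : ℂ) else 0) =
    (if v = 1 - u then φ v else 0) + (if v = (u - 1) / (2 * u - 1) then φ v else 0) := by
  have h20 : (2 : F) ≠ 0 := Ring.two_ne_zero h2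
  by_cases hv0 : v = 0
  · subst hv0
    have hz : φ 0 = 0 := φ.map_zero
    simp [hz]
  have hu1' : 1 - u ≠ 0 := fun h => hu1 (sub_eq_zero.mp h).symm
  by_cases hv1 : v = 1
  · subst hv1
    rw [if_neg (by simp), if_neg (by
      intro h; apply hu0; linear_combination h), if_neg]
    · ring
    · intro h
      by_cases hd : 2 * u - 1 = 0
      · rw [hd] at h; simp at h
      · rw [eq_div_iff hd] at h
        apply hu0; linear_combination h
  have hv1' : 1 - v ≠ 0 := fun h => hv1 (sub_eq_zero.mp h).symm
  have hcond : ((u * (1 - u)⁻¹ * (v * (1 - v)⁻¹)) ^ 2 = 1) ↔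
      (v = 1 - u ∨ v * (2 * u - 1) = u - 1) := by
    have : (u * (1 - u)⁻¹ * (v * (1 - v)⁻¹)) = (u * v) / ((1 - u) * (1 - v)) := by
      field_simp
    rw [this, div_pow, div_eq_one_iff_eq (pow_ne_zero _ (mul_ne_zero hu1' hv1')),
      sq_eq_sq_iff_eq_or_eq_neg]
    constructor
    · rintro (h | h)
      · left; linear_combination h
      · right; linear_combination h
    · rintro (h | h)
      · left; linear_combination h
      · right; linear_combination h
  have hdiv : v = (u - 1) / (2 * u - 1) ↔ v * (2 * u - 1) = u - 1 := by
    by_cases hd : 2 * u - 1 = 0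
    · rw [hd, div_zero, mul_zero]
      constructor
      · intro h; exact absurd h hv0
      · intro h; exact absurd (sub_eq_zero.mp h.symm) hu1
    · rw [eq_div_iff hd]
  by_cases hc1 : v = 1 - u
  · have hc2 : ¬ v * (2 * u - 1) = u - 1 := by
      intro h
      have : 2 * (u * (1 - u)) = 0 := by rw [hc1] at h; linear_combination h
      exact mul_ne_zero h20 (mul_ne_zero hu0 hu1') this
    rw [if_pos (hcond.mpr (Or.inl hc1)), if_pos hc1, if_neg (fun h => hc2 (hdiv.mp h))]; ring
  · by_cases hc2 : v * (2 * u - 1) = u - 1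
    · rw [if_pos (hcond.mpr (Or.inr hc2)), if_neg hc1, if_pos (hdiv.mpr hc2)]; ring
    · rw [if_neg (fun h => (hcond.mp h).elim hc1 hc2), if_neg hc1,
        if_neg (fun h => hc2 (hdiv.mp h))]; ring

lemma sum_J {F : Type} [Field F] [Fintype F] [Fintype (MulChar F ℂ)] (h2 : ringChar F ≠ 2)
    (φ : MulChar F ℂ) (hφ : orderOf φ = 2) (hm : φ (-1) = 1) :
    ∑ χ : MulChar F ℂ, jacobiSum (φ * χ ^ 2) (χ⁻¹ ^ 2) ^ 2 =
      ((Fintype.card F : ℂ) - 1) * (-1 + ∑ s : F, φ (s ^ 3 - s)) := by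
  classical
  have h20 : (2 : F) ≠ 0 := Ring.two_ne_zero h2
  have hJ : ∀ χ : MulChar F ℂ, jacobiSum (φ * χ ^ 2) (χ⁻¹ ^ 2) ^ 2 =
      ∑ u : F, ∑ v : F, φ u * φ v * χ ((u * (1 - u)⁻¹ * (v * (1 - v)⁻¹)) ^ 2) := by
    intro χ
    have : jacobiSum (φ * χ ^ 2) (χ⁻¹ ^ 2) = ∑ u : F, φ u * χ ((u * (1 - u)⁻¹) ^ 2) := by
      rw [jacobiSum]
      refine Finset.sum_congr rfl fun u _ => ?_
      rw [MulChar.mul_apply, MulChar.pow_apply' _ (by norm_num),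
        MulChar.pow_apply' _ (by norm_num), MulChar.inv_apply', map_pow, map_mul]
      ring
    rw [this, pow_two, Finset.sum_mul_sum]
    refine Finset.sum_congr rfl fun u _ => Finset.sum_congr rfl fun v _ => ?_
    rw [mul_pow (u * _) (v * _), map_mul χ]; ring
  simp_rw [hJ]
  rw [Finset.sum_comm]
  have hinner : ∀ u : F, ∑ χ : MulChar F ℂ, ∑ v : F,
      φ u * φ v * χ ((u * (1 - u)⁻¹ * (v * (1 - v)⁻¹)) ^ 2) =
      ((Fintype.card F : ℂ) - 1) * (φ u * φ (1 - u) + φ ((2 * u - 1) ^ 3 - (2 * u - 1))) := by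
    intro u
    rw [Finset.sum_comm]
    by_cases hu0 : u = 0
    · subst hu0
      norm_num [φ.map_zero]
    by_cases hu1 : u = 1
    · subst hu1
      have hz : ∀ ψ : MulChar F ℂ, ψ 0 = 0 := fun ψ => ψ.map_zero
      norm_num [hz]
    have : ∀ v : F, ∑ χ : MulChar F ℂ, φ u * φ v * χ ((u * (1 - u)⁻¹ * (v * (1 - v)⁻¹)) ^ 2) =
        ((Fintype.card F : ℂ) - 1) * φ u * ((if v = 1 - u then φ v else 0) +
          (if v = (u - 1) / (2 * u - 1) then φ v else 0)) := by
      intro v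
      rw [← pt_eq h2 φ u v hu0 hu1, ← Finset.mul_sum, sum_chars]
      split_ifs <;> ring
    rw [Finset.sum_congr rfl (fun v _ => this v), ← Finset.mul_sum, Finset.sum_add_distrib,
      Finset.sum_ite_eq', Finset.sum_ite_eq', if_pos (Finset.mem_univ _),
      if_pos (Finset.mem_univ _)]
    have : φ u * φ ((u - 1) / (2 * u - 1)) = φ ((2 * u - 1) ^ 3 - (2 * u - 1)) := by
      by_cases hd : 2 * u - 1 = 0
      · have hz : φ 0 = 0 := φ.map_zero
        rw [hd]; simp [hz]
      · rw [← map_mul, show ((2 * u - 1) ^ 3 - (2 * u - 1)) =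
          (2 * (2 * u - 1)) ^ 2 * (u * ((u - 1) / (2 * u - 1))) by field_simp; ring, map_mul φ (_ ^ 2),
          phi_apply_sq φ hφ _ (mul_ne_zero h20 hd), one_mul]
    rw [← this]; ring
  rw [Finset.sum_congr rfl (fun u _ => hinner u), ← Finset.mul_sum, Finset.sum_add_distrib]
  congr 2
  · have hφi : φ⁻¹ = φ := by
      have := phi_sq φ hφ
      rw [pow_two] at this
      exact inv_eq_of_mul_eq_one_left this
    have := jacobiSum_nontrivial_inv (phi_ne_one φ hφ)
    rw [hφi, hm] at this
    exact this
  · let e : F ≃ F := (Equiv.mulLeft₀ (2 : F) h20).trans (Equiv.subRight (1 : F))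
    exact Equiv.sum_comp e (fun s => φ (s ^ 3 - s))

lemma hyp_eq_aux {F : Type} [Field F] [Fintype F] [Fintype (MulChar F ℂ)] (h2 : ringChar F ≠ 2)
    (φ : MulChar F ℂ) (hφ : orderOf φ = 2) (hm : φ (-1) = 1) (χ₄ : MulChar F ℂ) (h4 : χ₄ ^ 2 = φ)
    (θ : AddChar F ℂ) (hθ : θ ≠ 1) :
  (-1 : ℂ) / ((Fintype.card F : ℂ) - 1) *
    ∑ χ : MulChar F ℂ,
      (∏ i, (gaussSum ((![χ₄, χ₄ ^ 3, χ₄, χ₄ ^ 3] : Fin 4 → MulChar F ℂ) i * χ) θ /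
          gaussSum ((![χ₄, χ₄ ^ 3, χ₄, χ₄ ^ 3] : Fin 4 → MulChar F ℂ) i) θ) *
        (gaussSum (((![1, φ, 1, φ] : Fin 4 → MulChar F ℂ) i * χ)⁻¹) θ /
          gaussSum (((![1, φ, 1, φ] : Fin 4 → MulChar F ℂ) i)⁻¹) θ)) *
      χ (-1) ^ (Fintype.card (Fin 4)) * χ 1 = 1 - ∑ s : F, φ (s ^ 3 - s) := by
  have hprim : θ.IsPrimitive := AddChar.IsPrimitive.of_ne_one hθ
  have hqC : (Fintype.card F : ℂ) ≠ 0 := by exact_mod_cast Fintype.card_ne_zero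
  have hq1 : (Fintype.card F : ℂ) - 1 ≠ 0 := by
    rw [sub_ne_zero]; exact_mod_cast Fintype.one_lt_card.ne'
  have hg : gaussSum φ θ ≠ 0 := gaussSum_ne_zero_of_nontrivial hqC (phi_ne_one φ hφ) hprim
  have hφi : φ⁻¹ = φ := by
    have := phi_sq φ hφ
    rw [pow_two] at this
    exact inv_eq_of_mul_eq_one_left this
  have hden : (gaussSum χ₄ θ * gaussSum (χ₄ ^ 3) θ * (gaussSum 1⁻¹ θ * gaussSum φ⁻¹ θ)) ^ 2
      = gaussSum φ θ ^ 6 := by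
    have := prod_sq h2 φ hφ χ₄ h4 θ hθ 1
    simp only [mul_one, one_pow, inv_one] at this ⊢
    rw [this, jacobiSum_comm, jacobiSum_one_nontrivial (phi_ne_one φ hφ)]; ring
  have hterm : ∀ χ : MulChar F ℂ, (∏ i, (gaussSum ((![χ₄, χ₄ ^ 3, χ₄, χ₄ ^ 3] : Fin 4 → MulChar F ℂ) i * χ) θ /
          gaussSum ((![χ₄, χ₄ ^ 3, χ₄, χ₄ ^ 3] : Fin 4 → MulChar F ℂ) i) θ) *
        (gaussSum (((![1, φ, 1, φ] : Fin 4 → MulChar F ℂ) i * χ)⁻¹) θ /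
          gaussSum (((![1, φ, 1, φ] : Fin 4 → MulChar F ℂ) i)⁻¹) θ)) *
      χ (-1) ^ (Fintype.card (Fin 4)) * χ 1 = jacobiSum (φ * χ ^ 2) (χ⁻¹ ^ 2) ^ 2 := by
    intro χ
    have h1 : χ (-1) ^ (Fintype.card (Fin 4)) = 1 := by
      rw [← map_pow, Fintype.card_fin, show (-1 : F) ^ 4 = 1 by norm_num, map_one]
    rw [h1, map_one, mul_one, mul_one]
    simp only [Fin.prod_univ_four]
    simp only [Matrix.cons_val]
    have e := prod_sq h2 φ hφ χ₄ h4 θ hθ χ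
    calc _ = (gaussSum (χ₄ * χ) θ * gaussSum (χ₄ ^ 3 * χ) θ * (gaussSum ((1 * χ)⁻¹) θ *
      gaussSum ((φ * χ)⁻¹) θ)) ^ 2 /
        (gaussSum χ₄ θ * gaussSum (χ₄ ^ 3) θ * (gaussSum 1⁻¹ θ * gaussSum φ⁻¹ θ)) ^ 2 := by
          simp only [div_eq_mul_inv, mul_inv, mul_pow, inv_pow]; ring
      _ = _ := by
        rw [e, hden]
        field_simp
  rw [Finset.sum_congr rfl (fun χ _ => hterm χ), sum_J h2 φ hφ hm]
  field_simp
  ring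

lemma gauss_int {F : Type} [Field F] [Fintype F] (h2 : ringChar F ≠ 2) (φ χ₄ : MulChar F ℂ)
    (hφ : orderOf φ = 2) (h4 : χ₄ ^ 2 = φ) (s : Finset F) :
    ∃ a b : ℤ, ∑ u ∈ s, χ₄ u * φ (1 - u) = a + b * Complex.I := by
  classical
  have hφv : ∀ u, ∃ c : ℤ, φ u = c := by
    intro u
    exact ⟨quadraticChar F u, by rw [quad_eq h2 φ hφ]; rfl⟩
  have hχv : ∀ u, ∃ a b : ℤ, χ₄ u = a + b * Complex.I := by
    intro u
    have h1 : (χ₄ u) ^ 2 = φ u := by rw [← MulChar.pow_apply' _ (by norm_num), h4]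
    rcases (((quadraticChar_isQuadratic F).comp (Int.castRingHom ℂ)) u) with h | h | h <;>
      rw [← quad_eq h2 φ hφ] at h <;> rw [h] at h1
    · exact ⟨0, 0, by simpa using h1⟩
    · rcases sq_eq_one_iff.mp h1 with h | h
      · exact ⟨1, 0, by simpa using h⟩
      · exact ⟨-1, 0, by simpa using h⟩
    · rw [← Complex.I_sq] at h1
      rcases sq_eq_sq_iff_eq_or_eq_neg.mp h1 with h | h
      · exact ⟨0, 1, by simpa using h⟩
      · exact ⟨0, -1, by simpa using h⟩
  induction s using Finset.induction_on with
  | empty => exact ⟨0, 0, by simp⟩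
  | insert u s hu ih =>
    obtain ⟨a, b, hab⟩ := ih
    obtain ⟨c, hc⟩ := hφv (1 - u)
    obtain ⟨a', b', hab'⟩ := hχv u
    refine ⟨a' * c + a, b' * c + b, ?_⟩
    rw [Finset.sum_insert hu, hab, hc, hab']
    push_cast; ring

lemma S_jacobi {F : Type} [Field F] [Fintype F] (h2 : ringChar F ≠ 2) (φ χ₄ : MulChar F ℂ)
    (hφ : orderOf φ = 2) (h4 : χ₄ ^ 2 = φ) (hm : φ (-1) = 1) :
    ∃ a b : ℤ, (Fintype.card F : ℤ) = a ^ 2 + b ^ 2 ∧ ∑ s : F, φ (s ^ 3 - s) = 2 * (a : ℂ) := by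
  classical
  obtain ⟨a, b, hab⟩ := gauss_int h2 φ χ₄ hφ h4 Finset.univ
  have hφi : φ⁻¹ = φ := by
    have := phi_sq φ hφ
    rw [pow_two] at this
    exact inv_eq_of_mul_eq_one_left this
  have hφ2 := phi_sq φ hφ
  have hJ : jacobiSum χ₄ φ = a + b * Complex.I := hab
  have hconj : jacobiSum χ₄⁻¹ φ = a - b * Complex.I := by
    have := congrArg star hJ
    rw [jacobiSum, star_sum] at this
    simp only [star_mul', MulChar.star_apply', hφi] at this
    rw [jacobiSum, this]
    simp
    ring
  have hχ1 : χ₄ ≠ 1 := by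
    rintro rfl; rw [one_pow] at h4; exact phi_ne_one φ hφ h4.symm
  have hi : χ₄⁻¹ = χ₄ * φ := by
    apply inv_eq_of_mul_eq_one_right
    rw [← mul_assoc, ← pow_two, h4, ← pow_two, hφ2]
  have hχφ : χ₄ * φ ≠ 1 := by
    rw [← hi]; simpa using hχ1
  refine ⟨a, b, ?_, ?_⟩
  · have h0 : ringChar ℂ ≠ ringChar F := by
      rw [ringChar.eq_zero]
      exact (CharP.ringChar_ne_zero_of_finite F).symm
    have := jacobiSum_mul_jacobiSum_inv h0 hχ1 (phi_ne_one φ hφ) hχφ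
    rw [hφi, hJ, hconj] at this
    have h3 : (Fintype.card F : ℂ) = (a : ℂ) ^ 2 + (b : ℂ) ^ 2 := by
      rw [← this]; linear_combination (-(b : ℂ) ^ 2) * Complex.I_sq
    exact_mod_cast h3
  · calc ∑ s : F, φ (s ^ 3 - s) = ∑ s : F, (fun u => χ₄ u * φ (1 - u)) (s ^ 2) := by
          refine Finset.sum_congr rfl fun s _ => ?_
          have : χ₄ (s ^ 2) = φ s := by
            rw [map_pow, ← MulChar.pow_apply' _ (by norm_num), h4]
          simp only
          rw [this, show s ^ 3 - s = (-1) * (s * (1 - s ^ 2)) by ring, map_mul, hm, one_mul, map_mul]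
      _ = ∑ u : F, (χ₄ u * φ (1 - u) + χ₄⁻¹ u * φ (1 - u)) := by
          rw [sum_sq h2 φ hφ (fun u => χ₄ u * φ (1 - u))]
          refine Finset.sum_congr rfl fun s _ => ?_
          rw [hi, MulChar.mul_apply]; ring
      _ = jacobiSum χ₄ φ + jacobiSum χ₄⁻¹ φ := Finset.sum_add_distrib
      _ = _ := by rw [hJ, hconj]; ring

theorem stmt16 {F : Type} [Field F] [Fintype F]
    (p r : ℕ) (hp : p.Prime) (hp2 : Odd p) (hr : 0 < r)
    (hcard : Fintype.card F = p ^ r) (hq4 : Fintype.card F % 4 = 1)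
    (θ : AddChar F ℂ) (hθ : θ ≠ 1)
    (φ : MulChar F ℂ) (hφ : orderOf φ = 2)
    (χ₄ : MulChar F ℂ) (hχ₄ : orderOf χ₄ = 4)
    (x y : ℤ) (hxy : (Fintype.card F : ℤ) = x ^ 2 + y ^ 2)
    (hx4 : x ≡ 1 [ZMOD 4]) (hpx : p % 4 = 1 → ¬ ((p : ℤ) ∣ x)) :
    (Fintype.card F % 8 = 1 →
      ffHyp θ ![χ₄, χ₄ ^ 3, χ₄, χ₄ ^ 3] ![1, φ, 1, φ] 1 = 1 + 2 * (x : ℂ)) ∧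
    (Fintype.card F % 8 = 5 →
      ffHyp θ ![χ₄, χ₄ ^ 3, χ₄, χ₄ ^ 3] ![1, φ, 1, φ] 1 = 1 - 2 * (x : ℂ)) := by
  classical
  have h2 : ringChar F ≠ 2 := by
    intro h
    have := FiniteField.even_card_of_char_two h
    omega
  have h20 : (2 : F) ≠ 0 := Ring.two_ne_zero h2
  have h4ord : orderOf (χ₄ ^ 2) = 2 := by
    rw [orderOf_pow, hχ₄]; rfl
  have h4 : χ₄ ^ 2 = φ := by rw [quad_eq h2 φ hφ, quad_eq h2 _ h4ord]
  have hm : φ (-1) = 1 := by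
    obtain ⟨i, hi⟩ : IsSquare (-1 : F) := FiniteField.isSquare_neg_one_iff.mpr (by omega)
    have hi0 : i ≠ 0 := by rintro rfl; simp at hi
    rw [hi, ← pow_two, phi_apply_sq φ hφ i hi0]
  have hF : ffHyp θ ![χ₄, χ₄ ^ 3, χ₄, χ₄ ^ 3] ![1, φ, 1, φ] 1 = 1 - ∑ s : F, φ (s ^ 3 - s) := by
    letI : Fintype (MulChar F ℂ) := Fintype.ofFinite _
    exact hyp_eq_aux h2 φ hφ hm χ₄ h4 θ hθ
  obtain ⟨a, b, hab, hS⟩ := S_jacobi h2 φ χ₄ hφ h4 hm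
  have hSZ : ∑ s : F, quadraticChar F (s ^ 3 - s) = 2 * a := by
    have : ((∑ s : F, quadraticChar F (s ^ 3 - s) : ℤ) : ℂ) = ((2 * a : ℤ) : ℂ) := by
      push_cast
      rw [← hS]
      refine Finset.sum_congr rfl fun s _ => ?_
      rw [quad_eq h2 φ hφ]; rfl
    exact_mod_cast this
  have h8 := S_mod8 hq4 h20
  rw [hSZ] at h8
  have hpa : p % 4 = 1 → ¬ ((p : ℤ) ∣ a) := by
    intro h1 hdvd
    haveI : CharP F p := by
      haveI := Fact.mk hp
      exact charP_of_card_eq_prime_pow hcard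
    have hc := S_cast hq4 h2
    rw [hSZ, hcard] at hc
    have h0 : ((2 * a : ℤ) : F) = 0 :=
      (CharP.intCast_eq_zero_iff F p _).mpr (Dvd.dvd.mul_left hdvd 2)
    rw [h0, eq_comm, neg_eq_zero] at hc
    rcases mul_eq_zero.mp hc with h | h
    · exact pow_ne_zero _ (neg_ne_zero.mpr one_ne_zero) h
    · exact choose_ndvd p hp h1 r ((CharP.cast_eq_zero_iff F p _).mp h)
  have hx4' : x % 4 = 1 := hx4
  have hcardZ : (Fintype.card F : ℤ) = (p : ℤ) ^ r := by rw [hcard]; push_cast; rfl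
  have hsq := nt_unique p r hp hp2 a b x y (by rw [← hab, hcardZ]) (by rw [← hxy, hcardZ])
    (by omega) (by omega) hpa hpx
  rw [hF, hS]
  rcases sq_eq_sq_iff_eq_or_eq_neg.mp hsq with h | h
  · constructor
    · intro h'; exfalso; omega
    · intro h'; rw [h]
  · constructor
    · intro h'; rw [h]; push_cast; ring
    · intro h'; exfalso; omega
end
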